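/- (Berger-Tung inner bound.) Let X₁, X₂, U₁, U₂, Y₁, Y₂ be finite sets, let P̄_{X₁X₂} be a joint pmf, let P̄_{U₁|X₁} and P̄_{U₂|X₂} be conditional pmfs, and define P̄(u₁, x₁, x₂, u₂) = P̄_{X₁X₂}(x₁,x₂) P̄_{U₁|X₁}(u₁|x₁) P̄_{U₂|X₂}(u₂|x₂). Let d_k : X_k × Y_k → ℝ≥0 (k = 1, 2) be distortion measures and φ_k : U₁ × U₂ → Y_k functions with E_{P̄}[ d_k(X_k, φ_k(U₁, U₂)) ] ≤ D_k for k = 1, 2. Then any rate pair (R₁, R₂) satisfying R₁ > I_{P̄}(X₁; U₁ | U₂), R₂ > I_{P̄}(X₂; U₂ | U₁), and R₁ + R₂ > I_{P̄}(X₁, X₂; U₁, U₂) is achievable under distortion levels (D₁, D₂): there exist sequences of (possibly stochastic) encoders f₁ₙ : X₁^n → M₁ with |M₁| ≤ ⌈2^{nR₁}⌉ and f₂ₙ : X₂^n → M₂ with |M₂| ≤ ⌈2^{nR₂}⌉, and a (possibly stochastic) decoder gₙ : M₁ × M₂ → Y₁^n × Y₂^n, such that for the i.i.d. sources (X₁ₜ,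 X₂ₜ) ~ P̄_{X₁X₂}, lim sup_n E[ (1/n) ∑_{t=1}^n d_k(X_{k,t}, Y_{k,t}) ] ≤ D_k for k = 1, 2. -/

import Mathlib

open Finset

/-- Mutual information (in bits) of a joint pmf given as `P : A → B → ℝ`:
`I(A;B) = ∑_{a,b} P(a,b) log₂( P(a,b) / (P_A(a) P_B(b)) )`. -/
noncomputable def mutInf {A B : Type*} [Fintype A] [Fintype B] (P : A → B → ℝ) : ℝ :=
  ∑ a, ∑ b, P a b * Real.logb 2 (P a b / ((∑ b', P a b') * (∑ a', P a' b)))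

/-- Conditional mutual information (in bits) of a joint pmf `P : A → B → C → ℝ`:
`I(A;B|C) = ∑_{a,b,c} P(a,b,c) log₂( P(a,b,c) P_C(c) / (P_{AC}(a,c) P_{BC}(b,c)) )`. -/
noncomputable def condMutInf {A B C : Type*} [Fintype A] [Fintype B] [Fintype C]
    (P : A → B → C → ℝ) : ℝ :=
  ∑ a, ∑ b, ∑ c, P a b c *
    Real.logb 2 ((P a b c * ∑ a', ∑ b', P a' b' c) /
      ((∑ b', P a b' c) * (∑ a', P a' b c)))

/-!
Each source is quantised with a codebook drawn i.i.d. from the output law of its test channel, and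
the codebook is split into bins: encoder `k` sends the bin, at rate `R_k`, but not the position in
the bin, of rate `ρ_k`. The likelihood encoder picks a codeword with probability proportional to the
density of the test channel at it. By soft covering, when `R_k + ρ_k > I(X_k; U_k)` it behaves as if
the codeword had been produced by the test channel from the source, so that the two codewords and
the sources are jointly distributed as under `P̄`. The decoder looks in the two bins for a pair
whose information ratio exceeds `2 ^ (n β)`. The right pair passes this test when `β < I(U₁; U₂)`,
whereas a wrong pair passes with probability at most `2 ^ (-n β)`; hence decoding succeeds when
`ρ₁ + ρ₂ < β`, or when there is no binning at all.

Suitable `ρ_k` exist because the Markov chain `U₁ - X₁ - X₂ - U₂` gives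
`I(X₁; U₁ | U₂) = I(X₁; U₁) - I(U₁; U₂)`, symmetrically in the indices, and
`I(X₁, X₂; U₁, U₂) = I(X₁; U₁) + I(X₂; U₂) - I(U₁; U₂)`. Finally, Chebyshev's inequality for the
empirical distortion under `P̄` makes exceeding `D_k + δ` a rare event, on which the distortion is
still bounded.
-/

open Filter Topology
open scoped BigOperators

lemma indicator_one_nonneg {A : Type*} (E : Set A) (a : A) : 0 ≤ E.indicator (1 : A → ℝ) a :=
  Set.indicator_nonneg (fun _ _ => zero_le_one) a

lemma indicator_one_le_one {A : Type*} (E : Set A) (a : A) : E.indicator (1 : A → ℝ) a ≤ 1 :=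
  Set.indicator_le_self' (fun _ _ => zero_le_one) a

lemma indicator_one_le_add_of_subset_union {A : Type*} {E F G : Set A} (h : E ⊆ F ∪ G) (a : A) :
    E.indicator (1 : A → ℝ) a ≤ F.indicator 1 a + G.indicator 1 a := by
  have hF := indicator_one_nonneg F a
  have hG := indicator_one_nonneg G a
  by_cases ha : a ∈ E
  · rcases h ha with haF | haG
    · simpa only [Set.indicator_of_mem ha, Set.indicator_of_mem haF, le_add_iff_nonneg_right]
    · simpa only [Set.indicator_of_mem ha, Set.indicator_of_mem haG, le_add_iff_nonneg_left]
  · simpa only [Set.indicator_of_notMem ha] using add_nonneg hF hG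

section Mean

variable {A B ι : Type*} [Fintype A] [Fintype B]

/-- The expectation of `f` under the law `p` on a finite set. -/
noncomputable def mean (p f : A → ℝ) : ℝ := ∑ a, p a * f a

/-- The probability of the event `E` under the law `p` on a finite set. -/
noncomputable def prob (p : A → ℝ) (E : Set A) : ℝ := mean p (E.indicator 1)

variable {p f g : A → ℝ} {E F G : Set A}

lemma mean_add (p f g : A → ℝ) : mean p (fun a => f a + g a) = mean p f + mean p g := by
  simp only [mean, mul_add, sum_add_distrib]

lemma mean_sub (p f g : A → ℝ) : mean p (fun a => f a - g a) = mean p f - mean p g := by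
  simp only [mean, mul_sub, sum_sub_distrib]

lemma mean_const_mul (p : A → ℝ) (c : ℝ) (f : A → ℝ) :
    mean p (fun a => c * f a) = c * mean p f := by
  simp only [mean, mul_sum, mul_left_comm]

lemma mean_mul_const (p f : A → ℝ) (c : ℝ) : mean p (fun a => f a * c) = mean p f * c := by
  simp only [mean, sum_mul, mul_assoc]

lemma mean_const (hp : ∑ a, p a = 1) (c : ℝ) : mean p (fun _ => c) = c := by
  rw [mean, ← sum_mul, hp, one_mul]

lemma mean_sum (p : A → ℝ) (s : Finset ι) (f : ι → A → ℝ) :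
    mean p (fun a => ∑ i ∈ s, f i a) = ∑ i ∈ s, mean p (f i) := by
  simp only [mean, mul_sum]
  exact sum_comm

lemma mean_expect [Fintype ι] (p : A → ℝ) (f : ι → A → ℝ) :
    mean p (fun a => 𝔼 i, f i a) = 𝔼 i, mean p (f i) := by
  simp only [mean, mul_expect, expect_sum_comm]

lemma mean_comm (p : A → ℝ) (q : B → ℝ) (f : A → B → ℝ) :
    mean p (fun a => mean q (f a)) = mean q fun b => mean p (f · b) := by
  simp only [mean, mul_sum]
  rw [sum_comm]
  simp only [mul_left_comm]

lemma mean_congr_of_ne_zero (h : ∀ a, p a ≠ 0 → f a = g a) : mean p f = mean p g :=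
  sum_congr rfl fun a _ => by
    by_cases ha : p a = 0
    · simp only [ha, zero_mul]
    · rw [h a ha]

lemma mean_le_mean_of_ne_zero (hp : ∀ a, 0 ≤ p a) (h : ∀ a, p a ≠ 0 → f a ≤ g a) :
    mean p f ≤ mean p g :=
  sum_le_sum fun a _ => by
    by_cases ha : p a = 0
    · simp only [ha, zero_mul, le_refl]
    · exact mul_le_mul_of_nonneg_left (h a ha) (hp a)

lemma mean_le_mean (hp : ∀ a, 0 ≤ p a) (h : ∀ a, f a ≤ g a) : mean p f ≤ mean p g :=
  mean_le_mean_of_ne_zero hp fun a _ => h a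

lemma mean_nonneg (hp : ∀ a, 0 ≤ p a) (hf : ∀ a, 0 ≤ f a) : 0 ≤ mean p f :=
  sum_nonneg fun a _ => mul_nonneg (hp a) (hf a)

lemma exists_le_mean (hp : p ∈ stdSimplex ℝ A) (f : A → ℝ) : ∃ a, f a ≤ mean p f := by
  have : Nonempty A := by
    by_contra! h
    simpa using hp.2
  obtain ⟨a, ha⟩ := Finite.exists_min f
  refine ⟨a, ?_⟩
  calc f a = mean p fun _ => f a := (mean_const hp.2 _).symm
    _ ≤ mean p f := mean_le_mean hp.1 ha

lemma mean_abs_le_sqrt (hp : p ∈ stdSimplex ℝ A) (f : A → ℝ) :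
    mean p (fun a => |f a|) ≤ √(mean p fun a => f a ^ 2) := by
  refine Real.le_sqrt_of_sq_le ?_
  set m := mean p fun a => |f a|
  have hvar : 0 ≤ mean p fun a => (|f a| - m) ^ 2 :=
    mean_nonneg hp.1 fun a => sq_nonneg _
  have hexpand : (mean p fun a => (|f a| - m) ^ 2) = mean p (fun a => f a ^ 2) - m ^ 2 := by
    simp only [sub_sq, sq_abs, mean_add, mean_sub, mean_mul_const, mean_const_mul, mean_const hp.2]
    change _ - 2 * m * m + m ^ 2 = _
    ring
  linarith

lemma mean_comp_equiv (e : A ≃ B) (p f : B → ℝ) : mean (p ∘ e) (f ∘ e) = mean p f :=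
  e.sum_comp fun b => p b * f b

lemma prob_nonneg (hp : ∀ a, 0 ≤ p a) (E : Set A) : 0 ≤ prob p E :=
  mean_nonneg hp (indicator_one_nonneg E)

lemma prob_mono_of_ne_zero (hp : ∀ a, 0 ≤ p a) (h : ∀ a, p a ≠ 0 → a ∈ E → a ∈ F) :
    prob p E ≤ prob p F :=
  mean_le_mean_of_ne_zero hp fun a ha => by
    by_cases hE : a ∈ E
    · simp only [Set.indicator_of_mem hE, Set.indicator_of_mem (h a ha hE), le_refl]
    · simp only [Set.indicator_of_notMem hE]
      exact indicator_one_nonneg F a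

lemma prob_le_add_of_subset_union (hp : ∀ a, 0 ≤ p a) (h : E ⊆ F ∪ G) :
    prob p E ≤ prob p F + prob p G := by
  rw [prob, prob, prob, ← mean_add]
  exact mean_le_mean hp (indicator_one_le_add_of_subset_union h)

lemma prob_le_mean_div (hp : ∀ a, 0 ≤ p a) (hf : ∀ a, 0 ≤ f a) {c : ℝ} (hc : 0 < c)
    (hE : ∀ a ∈ E, c ≤ f a) : prob p E ≤ mean p f / c := by
  rw [div_eq_mul_inv, ← mean_mul_const]
  refine mean_le_mean hp fun a => ?_
  rw [← div_eq_mul_inv]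
  refine Set.indicator_le' (fun a ha => ?_) (fun a _ => div_nonneg (hf a) hc.le) a
  exact (one_le_div hc).2 (hE a ha)

lemma prob_comp_equiv (e : A ≃ B) (p : B → ℝ) (E : Set B) :
    prob (p ∘ e) (e ⁻¹' E) = prob p E :=
  mean_comp_equiv e p (E.indicator 1)

end Mean

section Laws

variable {A B V : Type*}

/-- The joint law of `(a, b)` where `a` has law `p` and `b` has law `w a` given `a`. -/
def compProd (p : A → ℝ) (w : A → B → ℝ) : A × B → ℝ := fun x => p x.1 * w x.1 x.2

/-- The law of an independent pair with marginals `p` and `q`. -/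
def prodLaw (p : A → ℝ) (q : B → ℝ) : A × B → ℝ := compProd p fun _ => q

/-- The kernel whose two outputs are conditionally independent given the input. -/
def prodKernel (w : A → B → ℝ) (w' : A → V → ℝ) : A → B × V → ℝ := fun a => prodLaw (w a) (w' a)

/-- The law of the output of the kernel `w` when its input has law `p`. -/
noncomputable def outputLaw [Fintype A] (p : A → ℝ) (w : A → B → ℝ) : B → ℝ :=
  fun b => mean p (w · b)

/-- The law of a tuple of independent entries, the `i`-th one with law `μ i`. -/
def piLaw {ι : Type*} [Fintype ι] (μ : ι → A → ℝ) : (ι → A) → ℝ := fun a => ∏ i, μ i (a i)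

/-- The law of a tuple of i.i.d. entries with law `q`. -/
def iidLaw (ι : Type*) [Fintype ι] (q : A → ℝ) : (ι → A) → ℝ := piLaw fun _ => q

/-- The memoryless extension of the kernel `w`. -/
def iidKernel (ι : Type*) [Fintype ι] (w : A → B → ℝ) : (ι → A) → (ι → B) → ℝ :=
  fun a => piLaw fun i => w (a i)

variable {p : A → ℝ} {q : B → ℝ} {w : A → B → ℝ} {w' : A → V → ℝ}

section Single

variable [Fintype A] [Fintype B]

lemma mean_compProd (p : A → ℝ) (w : A → B → ℝ) (f : A × B → ℝ) :
    mean (compProd p w) f = mean p fun a => mean (w a) fun b => f (a, b) := by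
  simp only [mean, compProd, Fintype.sum_prod_type, mul_sum, mul_assoc]

lemma mean_prodLaw (p : A → ℝ) (q : B → ℝ) (f : A × B → ℝ) :
    mean (prodLaw p q) f = mean p fun a => mean q fun b => f (a, b) :=
  mean_compProd p _ f

lemma mean_outputLaw (p : A → ℝ) (w : A → B → ℝ) (f : B → ℝ) :
    mean (outputLaw p w) f = mean p fun a => mean (w a) f := by
  simp only [mean, outputLaw, sum_mul, mul_sum, mul_assoc]
  exact sum_comm

lemma prob_compProd_snd (p : A → ℝ) (w : A → B → ℝ) (E : Set B) :
    prob (compProd p w) (Prod.snd ⁻¹' E) = prob (outputLaw p w) E := by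
  rw [prob, mean_compProd, prob, mean_outputLaw]
  rfl

lemma compProd_mem_stdSimplex (hp : p ∈ stdSimplex ℝ A) (hw : ∀ a, w a ∈ stdSimplex ℝ B) :
    compProd p w ∈ stdSimplex ℝ (A × B) := by
  refine ⟨fun x => mul_nonneg (hp.1 _) ((hw _).1 _), ?_⟩
  simp only [compProd, Fintype.sum_prod_type, ← mul_sum, (hw _).2, mul_one, hp.2]

lemma prodLaw_mem_stdSimplex (hp : p ∈ stdSimplex ℝ A) (hq : q ∈ stdSimplex ℝ B) :
    prodLaw p q ∈ stdSimplex ℝ (A × B) :=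
  compProd_mem_stdSimplex hp fun _ => hq

lemma outputLaw_mem_stdSimplex (hp : p ∈ stdSimplex ℝ A) (hw : ∀ a, w a ∈ stdSimplex ℝ B) :
    outputLaw p w ∈ stdSimplex ℝ B := by
  refine ⟨fun b => mean_nonneg hp.1 fun a => (hw a).1 b, ?_⟩
  simp only [outputLaw]
  rw [← mean_sum]
  simp only [(hw _).2, mean_const hp.2]

end Single

lemma prodKernel_mem_stdSimplex [Fintype B] [Fintype V] (hw : ∀ a, w a ∈ stdSimplex ℝ B)
    (hw' : ∀ a, w' a ∈ stdSimplex ℝ V) (a : A) :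
    prodKernel w w' a ∈ stdSimplex ℝ (B × V) :=
  prodLaw_mem_stdSimplex (hw a) (hw' a)

lemma sum_outputLaw_prodKernel_right [Fintype A] [Fintype V] (hw' : ∀ a, w' a ∈ stdSimplex ℝ V)
    (b : B) :
    ∑ v, outputLaw p (prodKernel w w') (b, v) = outputLaw p w b := by
  simp only [outputLaw]
  rw [← mean_sum]
  simp only [prodKernel, prodLaw, compProd, ← mul_sum, (hw' _).2, mul_one]

lemma sum_outputLaw_prodKernel_left [Fintype A] [Fintype B] (hw : ∀ a, w a ∈ stdSimplex ℝ B)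
    (v : V) :
    ∑ b, outputLaw p (prodKernel w w') (b, v) = outputLaw p w' v := by
  simp only [outputLaw]
  rw [← mean_sum]
  simp only [prodKernel, prodLaw, compProd, ← sum_mul, (hw _).2, one_mul]

lemma outputLaw_prodKernel_swap [Fintype A] (p : A → ℝ) (w : A → B → ℝ) (w' : A → V → ℝ) (b : B)
    (v : V) : outputLaw p (prodKernel w' w) (v, b) = outputLaw p (prodKernel w w') (b, v) :=
  sum_congr rfl fun a _ => congrArg (p a * ·) (mul_comm (w' a v) (w a b))

section Tuple

variable {ι : Type*} [Fintype ι]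

lemma compProd_iid (p : A → ℝ) (w : A → B → ℝ) :
    compProd (iidLaw ι p) (iidKernel ι w) =
      iidLaw ι (compProd p w) ∘ (Equiv.arrowProdEquivProdArrow ι (fun _ => A) fun _ => B).symm :=
  funext fun _ => prod_mul_distrib.symm

lemma prodKernel_iid (w : A → B → ℝ) (w' : A → V → ℝ) (a : ι → A) :
    prodKernel (iidKernel ι w) (iidKernel ι w') a =
      iidKernel ι (prodKernel w w') a ∘
        (Equiv.arrowProdEquivProdArrow ι (fun _ => B) fun _ => V).symm :=
  funext fun _ => prod_mul_distrib.symm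

variable [DecidableEq ι] [Fintype A]

lemma mean_piLaw_prod (μ f : ι → A → ℝ) :
    mean (piLaw μ) (fun a => ∏ i, f i (a i)) = ∏ i, mean (μ i) (f i) := by
  simp only [mean, piLaw, ← prod_mul_distrib, Fintype.prod_sum]

lemma mean_piLaw_prod_mem {μ : ι → A → ℝ} (hμ : ∀ i, ∑ a, μ i a = 1) (s : Finset ι)
    (f : ι → A → ℝ) :
    mean (piLaw μ) (fun a => ∏ i ∈ s, f i (a i)) = ∏ i ∈ s, mean (μ i) (f i) := by
  have hone (a : ι → A) : ∏ i ∈ s, f i (a i) = ∏ i, if i ∈ s then f i (a i) else 1 :=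
    (Fintype.prod_ite_mem s _).symm
  simp only [hone, mean_piLaw_prod μ fun i a => if i ∈ s then f i a else 1]
  rw [← Fintype.prod_ite_mem s]
  refine prod_congr rfl fun i _ => ?_
  split_ifs
  · rfl
  · exact mean_const (hμ i) 1

lemma piLaw_mem_stdSimplex {μ : ι → A → ℝ} (hμ : ∀ i, μ i ∈ stdSimplex ℝ A) :
    piLaw μ ∈ stdSimplex ℝ (ι → A) := by
  refine ⟨fun a => prod_nonneg fun i _ => (hμ i).1 _, ?_⟩
  simp only [piLaw, ← Fintype.prod_sum, (hμ _).2, prod_const_one]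

lemma iidLaw_mem_stdSimplex (hp : p ∈ stdSimplex ℝ A) : iidLaw ι p ∈ stdSimplex ℝ (ι → A) :=
  piLaw_mem_stdSimplex fun _ => hp

lemma outputLaw_iid (p : A → ℝ) (w : A → B → ℝ) :
    outputLaw (iidLaw ι p) (iidKernel ι w) = iidLaw ι (outputLaw p w) :=
  funext fun b => mean_piLaw_prod (fun _ => p) fun i a => w a (b i)

lemma mean_iidLaw_apply (hp : ∑ a, p a = 1) (i : ι) (f : A → ℝ) :
    mean (iidLaw ι p) (fun a => f (a i)) = mean p f := by
  simpa only [iidLaw, prod_singleton] using mean_piLaw_prod_mem (fun _ => hp) {i} fun _ => f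

lemma mean_iidLaw_apply_mul_apply (hp : ∑ a, p a = 1) {i j : ι} (hij : i ≠ j) (f g : A → ℝ) :
    mean (iidLaw ι p) (fun a => f (a i) * g (a j)) = mean p f * mean p g := by
  simpa only [iidLaw, prod_pair hij, Function.update_self, Function.update_of_ne hij.symm] using
    mean_piLaw_prod_mem (fun _ => hp) {i, j} (Function.update (fun _ => g) i f)

end Tuple

end Laws

section SecondMoment

variable {J V : Type*} [Fintype J] [DecidableEq J] [Fintype V] {q : V → ℝ}

lemma mean_sub_mean_sq (hq : ∑ v, q v = 1) (s : V → ℝ) :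
    mean q (fun v => (s v - mean q s) ^ 2) = mean q (fun v => s v ^ 2) - mean q s ^ 2 := by
  simp only [sub_sq, mean_add, mean_sub, mean_mul_const, mean_const_mul, mean_const hq]
  ring

lemma mean_iidLaw_sum_sq_of_mean_eq_zero (hq : ∑ v, q v = 1) {s : V → ℝ} (hs : mean q s = 0) :
    mean (iidLaw J q) (fun C => (∑ j, s (C j)) ^ 2) =
      Fintype.card J * mean q fun v => s v ^ 2 := by
  have hterm (i j : J) : mean (iidLaw J q) (fun C => s (C i) * s (C j)) =
      if i = j then mean q (fun v => s v ^ 2) else 0 := by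
    split_ifs with h
    · simp only [← h, ← sq]
      exact mean_iidLaw_apply hq i fun v => s v ^ 2
    · rw [mean_iidLaw_apply_mul_apply hq h, hs, zero_mul]
  simp only [sq (∑ _, s _), sum_mul_sum, mean_sum, hterm, sum_ite_eq, mem_univ, if_true,
    sum_const, card_univ, nsmul_eq_mul]

lemma mean_iidLaw_sq_expect_sub_le [Nonempty J] (hq : q ∈ stdSimplex ℝ V) (s : V → ℝ) :
    mean (iidLaw J q) (fun C => (𝔼 j, s (C j) - mean q s) ^ 2) ≤
      mean q (fun v => s v ^ 2) / Fintype.card J := by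
  have hcenter : mean q (fun v => s v - mean q s) = 0 := by
    rw [mean_sub, mean_const hq.2, sub_self]
  have hsq (C : J → V) : (𝔼 j, s (C j) - mean q s) ^ 2 =
      ((Fintype.card J : ℝ) ^ 2)⁻¹ * (∑ j, (s (C j) - mean q s)) ^ 2 := by
    rw [Fintype.expect_eq_sum_div_card, sum_sub_distrib, sum_const, card_univ, nsmul_eq_mul]
    field_simp
  simp only [hsq, mean_const_mul]
  rw [mean_iidLaw_sum_sq_of_mean_eq_zero hq.2 hcenter, mean_sub_mean_sq hq.2]
  calc ((Fintype.card J : ℝ) ^ 2)⁻¹ * (Fintype.card J * (mean q (fun v => s v ^ 2) - mean q s ^ 2))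
      = (mean q (fun v => s v ^ 2) - mean q s ^ 2) / Fintype.card J := by field_simp
    _ ≤ mean q (fun v => s v ^ 2) / Fintype.card J := by
        gcongr
        exact sub_le_self _ (sq_nonneg _)

lemma prob_iidLaw_le_abs_expect_sub [Nonempty J] (hq : q ∈ stdSimplex ℝ V) (s : V → ℝ) {δ : ℝ}
    (hδ : 0 < δ) :
    prob (iidLaw J q) {C | δ ≤ |𝔼 j, s (C j) - mean q s|} ≤
      mean q (fun v => s v ^ 2) / (Fintype.card J * δ ^ 2) := by
  calc prob (iidLaw J q) {C | δ ≤ |𝔼 j, s (C j) - mean q s|}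
      ≤ mean (iidLaw J q) (fun C => (𝔼 j, s (C j) - mean q s) ^ 2) / δ ^ 2 := by
        refine prob_le_mean_div (iidLaw_mem_stdSimplex hq).1 (fun _ => sq_nonneg _)
          (pow_pos hδ 2) fun C hC => ?_
        rw [← sq_abs (_ - _)]
        exact pow_le_pow_left₀ hδ.le hC 2
    _ ≤ mean q (fun v => s v ^ 2) / Fintype.card J / δ ^ 2 := by
        gcongr
        exact mean_iidLaw_sq_expect_sub_le hq s
    _ = mean q (fun v => s v ^ 2) / (Fintype.card J * δ ^ 2) := div_div _ _ _

lemma tendsto_prob_iidLaw_le_abs_expect_sub (hq : q ∈ stdSimplex ℝ V) (s : V → ℝ) {δ : ℕ → ℝ}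
    (hδ : ∀ᶠ n in atTop, 0 < δ n) (hδn : Tendsto (fun n : ℕ => n * δ n ^ 2) atTop atTop) :
    Tendsto (fun n => prob (iidLaw (Fin n) q) {C | δ n ≤ |𝔼 j, s (C j) - mean q s|})
      atTop (𝓝 0) := by
  refine squeeze_zero' (.of_forall fun n => prob_nonneg (iidLaw_mem_stdSimplex hq).1 _) ?_
    (hδn.const_div_atTop (mean q fun v => s v ^ 2))
  filter_upwards [hδ, eventually_ge_atTop 1] with n hn hn1
  have : Nonempty (Fin n) := ⟨⟨0, hn1⟩⟩
  simpa only [Fintype.card_fin] using prob_iidLaw_le_abs_expect_sub (J := Fin n) hq s hn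

lemma tendsto_prob_iidLaw_expect_ge (hq : q ∈ stdSimplex ℝ V) {s : V → ℝ} {m : ℝ}
    (hm : mean q s ≤ m) {δ : ℕ → ℝ} (hδ : ∀ᶠ n in atTop, 0 < δ n)
    (hδn : Tendsto (fun n : ℕ => n * δ n ^ 2) atTop atTop) :
    Tendsto (fun n => prob (iidLaw (Fin n) q) {C | m + δ n ≤ 𝔼 j, s (C j)}) atTop (𝓝 0) := by
  refine squeeze_zero (fun n => prob_nonneg (iidLaw_mem_stdSimplex hq).1 _) (fun n => ?_)
    (tendsto_prob_iidLaw_le_abs_expect_sub hq s hδ hδn)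
  refine prob_mono_of_ne_zero (iidLaw_mem_stdSimplex hq).1 fun C _ hC => ?_
  rw [Set.mem_ofPred_eq] at hC ⊢
  exact le_abs.2 (.inl (by linarith))

lemma tendsto_prob_iidLaw_two_rpow_le_prod (hq : q ∈ stdSimplex ℝ V) {g : V → ℝ}
    (hg : ∀ v, q v ≠ 0 → 0 < g v) {c : ℝ} (hc : mean q (fun v => Real.logb 2 (g v)) < c) :
    Tendsto (fun n : ℕ => prob (iidLaw (Fin n) q) {C | (2 : ℝ) ^ (n * c) ≤ ∏ j, g (C j)})
      atTop (𝓝 0) := by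
  set m := mean q fun v => Real.logb 2 (g v)
  have hδ : 0 < c - m := sub_pos.2 hc
  refine squeeze_zero' (.of_forall fun n => prob_nonneg (iidLaw_mem_stdSimplex hq).1 _) ?_
    (tendsto_prob_iidLaw_expect_ge hq (le_refl m) (.of_forall fun _ => hδ)
      (tendsto_natCast_atTop_atTop.atTop_mul_const (pow_pos hδ 2)))
  filter_upwards [eventually_gt_atTop 0] with n hn
  refine prob_mono_of_ne_zero (iidLaw_mem_stdSimplex hq).1 fun C hC hle => ?_
  have hgC (j : Fin n) : g (C j) ≠ 0 := (hg _ fun h => hC (prod_eq_zero (mem_univ j) h)).ne'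
  have hlog : n * c ≤ ∑ j, Real.logb 2 (g (C j)) := by
    rw [← Real.logb_prod _ _ fun j _ => hgC j,
      ← Real.logb_rpow two_pos (OfNat.ofNat_ne_one 2) (x := n * c)]
    exact Real.logb_le_logb_of_le one_lt_two (by positivity) hle
  rw [Set.mem_ofPred_eq, add_sub_cancel, Fintype.expect_eq_sum_div_card, Fintype.card_fin,
    le_div_iff₀' (by exact_mod_cast hn)]
  exact hlog

lemma tendsto_prob_iidLaw_prod_le_two_rpow (hq : q ∈ stdSimplex ℝ V) {g : V → ℝ}
    (hg : ∀ v, q v ≠ 0 → 0 < g v) {c : ℝ} (hc : c < mean q fun v => Real.logb 2 (g v)) :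
    Tendsto (fun n : ℕ => prob (iidLaw (Fin n) q) {C | ∏ j, g (C j) ≤ (2 : ℝ) ^ (n * c)})
      atTop (𝓝 0) := by
  have hinv : mean q (fun v => Real.logb 2 (g v)⁻¹) < -c := by
    simp only [Real.logb_inv, ← neg_one_mul (Real.logb 2 _), mean_const_mul]
    linarith
  refine squeeze_zero (fun n => prob_nonneg (iidLaw_mem_stdSimplex hq).1 _) (fun n => ?_)
    (tendsto_prob_iidLaw_two_rpow_le_prod hq (fun v hv => inv_pos.2 (hg v hv)) hinv)
  refine prob_mono_of_ne_zero (iidLaw_mem_stdSimplex hq).1 fun C hC hle => ?_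
  have hpos : 0 < ∏ j, g (C j) :=
    prod_pos fun j _ => hg _ fun h => hC (prod_eq_zero (mem_univ j) h)
  rw [Set.mem_ofPred_eq, mul_neg, Real.rpow_neg zero_le_two, prod_inv_distrib]
  exact inv_anti₀ hpos hle

end SecondMoment

section Density

variable {Ω V V' : Type*} [Fintype Ω] {p : Ω → ℝ} {w : Ω → V → ℝ} {w' : Ω → V' → ℝ}

/-- The likelihood ratio of `w ω` with respect to the output law. It is only meaningful when
`p ω ≠ 0`, which makes `w ω` absolutely continuous with respect to the output law. -/
noncomputable def density (p : Ω → ℝ) (w : Ω → V → ℝ) (ω : Ω) (v : V) : ℝ :=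
  w ω v / outputLaw p w v

lemma density_nonneg (hp : ∀ ω, 0 ≤ p ω) (hw : ∀ ω v, 0 ≤ w ω v) (ω : Ω) (v : V) :
    0 ≤ density p w ω v :=
  div_nonneg (hw ω v) (mean_nonneg hp fun ω => hw ω v)

lemma outputLaw_pos (hp : ∀ ω, 0 ≤ p ω) (hw : ∀ ω v, 0 ≤ w ω v) {x : Ω × V}
    (hx : compProd p w x ≠ 0) : 0 < outputLaw p w x.2 :=
  calc 0 < p x.1 * w x.1 x.2 := (mul_nonneg (hp _) (hw _ _)).lt_of_ne hx.symm
    _ ≤ outputLaw p w x.2 :=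
      single_le_sum (fun ω _ => mul_nonneg (hp ω) (hw ω _)) (mem_univ x.1)

lemma density_pos (hp : ∀ ω, 0 ≤ p ω) (hw : ∀ ω v, 0 ≤ w ω v) {x : Ω × V}
    (hx : compProd p w x ≠ 0) : 0 < density p w x.1 x.2 :=
  div_pos ((hw _ _).lt_of_ne (right_ne_zero_of_mul hx).symm) (outputLaw_pos hp hw hx)

lemma outputLaw_mul_density (hp : ∀ ω, 0 ≤ p ω) (hw : ∀ ω v, 0 ≤ w ω v) {ω : Ω} (hω : p ω ≠ 0)
    (v : V) : outputLaw p w v * density p w ω v = w ω v := by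
  by_cases hwv : w ω v = 0
  · rw [density, hwv, zero_div, mul_zero]
  · exact mul_div_cancel₀ _ (outputLaw_pos hp hw (x := (ω, v)) (mul_ne_zero hω hwv)).ne'

lemma mean_outputLaw_density_mul [Fintype V] (hp : ∀ ω, 0 ≤ p ω) (hw : ∀ ω v, 0 ≤ w ω v) {ω : Ω}
    (hω : p ω ≠ 0) (h : V → ℝ) :
    mean (outputLaw p w) (fun v => density p w ω v * h v) = mean (w ω) h := by
  simp only [mean, ← mul_assoc, outputLaw_mul_density hp hw hω]

lemma mean_outputLaw_density [Fintype V] (hp : ∀ ω, 0 ≤ p ω) (hw : ∀ ω, w ω ∈ stdSimplex ℝ V)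
    {ω : Ω} (hω : p ω ≠ 0) : mean (outputLaw p w) (density p w ω) = 1 := by
  simpa only [mul_one, mean_const (hw ω).2] using
    mean_outputLaw_density_mul hp (fun ω => (hw ω).1) hω fun _ => 1

lemma density_iid {ι : Type*} [Fintype ι] [DecidableEq ι] (p : Ω → ℝ) (w : Ω → V → ℝ)
    (ω : ι → Ω) (v : ι → V) :
    density (iidLaw ι p) (iidKernel ι w) ω v = ∏ i, density p w (ω i) (v i) := by
  rw [density, outputLaw_iid]
  exact (prod_div_distrib _ _).symm

lemma outputLaw_prodKernel_iid {ι : Type*} [Fintype ι] [DecidableEq ι] (p : Ω → ℝ)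
    (w : Ω → V → ℝ) (w' : Ω → V' → ℝ) (v : (ι → V) × (ι → V')) :
    outputLaw (iidLaw ι p) (prodKernel (iidKernel ι w) (iidKernel ι w')) v =
      ∏ i, outputLaw p (prodKernel w w') (v.1 i, v.2 i) := by
  simp only [outputLaw, prodKernel_iid]
  exact congrFun (outputLaw_iid p (prodKernel w w')) fun i => (v.1 i, v.2 i)

/-- The likelihood ratio of a joint law with respect to the product of its marginals, whose
logarithm is the information density. -/
noncomputable def infoRatio [Fintype V] [Fintype V'] (Q : V × V' → ℝ) (v : V × V') : ℝ :=
  Q v / ((∑ b, Q (v.1, b)) * ∑ a, Q (a, v.2))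

variable [Fintype V] [Fintype V']

lemma infoRatio_nonneg {Q : V × V' → ℝ} (hQ : ∀ v, 0 ≤ Q v) (v : V × V') : 0 ≤ infoRatio Q v :=
  div_nonneg (hQ v) (mul_nonneg (sum_nonneg fun _ _ => hQ _) (sum_nonneg fun _ _ => hQ _))

lemma infoRatio_pos {Q : V × V' → ℝ} (hQ : ∀ v, 0 ≤ Q v) {v : V × V'} (hv : Q v ≠ 0) :
    0 < infoRatio Q v := by
  have hpos : 0 < Q v := (hQ v).lt_of_ne hv.symm
  exact div_pos hpos <| mul_pos
    (hpos.trans_le (single_le_sum (f := fun b => Q (v.1, b)) (fun _ _ => hQ _) (mem_univ v.2)))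
    (hpos.trans_le (single_le_sum (f := fun a => Q (a, v.2)) (fun _ _ => hQ _) (mem_univ v.1)))

lemma prob_prodLaw_lt_infoRatio_le {Q : V × V' → ℝ} (hQ : Q ∈ stdSimplex ℝ (V × V')) {β : ℝ}
    (hβ : 0 < β) :
    prob (prodLaw (fun a => ∑ b, Q (a, b)) fun b => ∑ a, Q (a, b)) {v | β < infoRatio Q v} ≤
      β⁻¹ := by
  set P := prodLaw (fun a => ∑ b, Q (a, b)) fun b => ∑ a, Q (a, b)
  have hP (v : V × V') : 0 ≤ P v :=
    mul_nonneg (sum_nonneg fun _ _ => hQ.1 _) (sum_nonneg fun _ _ => hQ.1 _)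
  have hmean : mean P (infoRatio Q) ≤ 1 := by
    rw [← hQ.2]
    refine sum_le_sum fun v _ => ?_
    rw [infoRatio, mul_div_left_comm]
    exact mul_le_of_le_one_right (hQ.1 v) (div_self_le_one _)
  calc prob P {v | β < infoRatio Q v} ≤ mean P (infoRatio Q) / β :=
        prob_le_mean_div hP (infoRatio_nonneg hQ.1) hβ fun _ hv => le_of_lt hv
    _ ≤ β⁻¹ := by
        rw [div_eq_mul_inv]
        exact mul_le_of_le_one_left (inv_nonneg.2 hβ.le) hmean

lemma infoRatio_iid {ι : Type*} [Fintype ι] [DecidableEq ι] (p : Ω → ℝ)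
    (hw : ∀ ω, w ω ∈ stdSimplex ℝ V) (hw' : ∀ ω, w' ω ∈ stdSimplex ℝ V')
    (v : (ι → V) × (ι → V')) :
    infoRatio (outputLaw (iidLaw ι p) (prodKernel (iidKernel ι w) (iidKernel ι w'))) v =
      ∏ i, infoRatio (outputLaw p (prodKernel w w')) (v.1 i, v.2 i) := by
  have hwn (ω : ι → Ω) : iidKernel ι w ω ∈ stdSimplex ℝ (ι → V) :=
    piLaw_mem_stdSimplex fun _ => hw _
  have hwn' (ω : ι → Ω) : iidKernel ι w' ω ∈ stdSimplex ℝ (ι → V') :=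
    piLaw_mem_stdSimplex fun _ => hw' _
  simp only [infoRatio, sum_outputLaw_prodKernel_right hw', sum_outputLaw_prodKernel_left hw,
    sum_outputLaw_prodKernel_right hwn', sum_outputLaw_prodKernel_left hwn, prod_div_distrib,
    prod_mul_distrib]
  rw [outputLaw_prodKernel_iid, outputLaw_iid, outputLaw_iid]
  rfl

end Density

section SoftCovering

variable {J V Ω : Type*} [Fintype J] [DecidableEq J] [Nonempty J] [Fintype V] [Fintype Ω]

lemma mean_sq_indicator_lt_le {q r : V → ℝ} (hq : ∀ v, 0 ≤ q v) (hr : ∀ v, 0 ≤ r v)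
    (hr1 : mean q r = 1) {γ : ℝ} (hγ : 0 ≤ γ) :
    mean q (fun v => {v | γ ≤ r v}ᶜ.indicator r v ^ 2) ≤ γ := by
  calc mean q (fun v => {v | γ ≤ r v}ᶜ.indicator r v ^ 2)
      ≤ mean q (fun v => γ * r v) := mean_le_mean hq fun v => by
        by_cases hv : γ ≤ r v
        · simpa [hv] using mul_nonneg hγ (hr v)
        · simpa [hv, sq] using mul_le_mul_of_nonneg_right (not_le.1 hv).le (hr v)
    _ = γ := by rw [mean_const_mul, hr1, mul_one]

/-- Only the part of the density below `γ` has a controlled second moment; the part above is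
bounded in `L¹`. -/
lemma mean_iidLaw_abs_expect_sub_one_le {q r : V → ℝ} (hq : q ∈ stdSimplex ℝ V)
    (hr : ∀ v, 0 ≤ r v) (hr1 : mean q r = 1) {γ : ℝ} (hγ : 0 ≤ γ) :
    mean (iidLaw J q) (fun C => |𝔼 j, r (C j) - 1|) ≤
      √(γ / Fintype.card J) + 2 * mean q ({v | γ ≤ r v}.indicator r) := by
  set b := {v | γ ≤ r v}.indicator r
  set s := {v | γ ≤ r v}ᶜ.indicator r
  have hb (v : V) : 0 ≤ b v := Set.indicator_nonneg (fun v _ => hr v) v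
  have hbs (v : V) : r v = b v + s v := (Set.indicator_self_add_compl_apply _ r v).symm
  have hmean : mean q r = mean q b + mean q s := by
    rw [← mean_add]
    exact congrArg (mean q) (funext hbs)
  have hsplit (C : J → V) : |𝔼 j, r (C j) - 1| ≤
      |𝔼 j, s (C j) - mean q s| + (𝔼 j, b (C j) + mean q b) := by
    have hdecomp : 𝔼 j, r (C j) - 1 =
        (𝔼 j, s (C j) - mean q s) + (𝔼 j, b (C j) - mean q b) := by
      rw [← hr1, hmean]
      simp only [hbs, expect_add_distrib]
      ring
    rw [hdecomp]
    refine (abs_add_le _ _).trans (add_le_add_right ((abs_sub _ _).trans_eq ?_) _)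
    rw [abs_of_nonneg (expect_nonneg fun _ _ => hb _), abs_of_nonneg (mean_nonneg hq.1 hb)]
  have hs : mean (iidLaw J q) (fun C => |𝔼 j, s (C j) - mean q s|) ≤ √(γ / Fintype.card J) := by
    refine (mean_abs_le_sqrt (iidLaw_mem_stdSimplex hq) _).trans (Real.sqrt_le_sqrt ?_)
    refine (mean_iidLaw_sq_expect_sub_le hq s).trans ?_
    gcongr
    exact mean_sq_indicator_lt_le hq.1 hr hr1 hγ
  refine (mean_le_mean (iidLaw_mem_stdSimplex hq).1 hsplit).trans ?_
  simp only [mean_add, mean_expect, mean_iidLaw_apply hq.2, Fintype.expect_const,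
    mean_const (iidLaw_mem_stdSimplex hq).2]
  linarith

/-- The soft-covering bound on how far the empirical mean of the density of `w` over a random
codebook indexed by `J` is from `1`; `γ` is the level at which the density is truncated. -/
noncomputable def coveringError (J : Type*) [Fintype J] (p : Ω → ℝ) (w : Ω → V → ℝ) (γ : ℝ) : ℝ :=
  √(γ / Fintype.card J) + 2 * prob (compProd p w) {x | γ ≤ density p w x.1 x.2}

lemma mean_mean_iidLaw_abs_expect_density_sub_one_le {p : Ω → ℝ} {w : Ω → V → ℝ}
    (hp : p ∈ stdSimplex ℝ Ω) (hw : ∀ ω, w ω ∈ stdSimplex ℝ V) {γ : ℝ} (hγ : 0 ≤ γ) :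
    mean p (fun ω => mean (iidLaw J (outputLaw p w)) fun C => |𝔼 j, density p w ω (C j) - 1|) ≤
      coveringError J p w γ := by
  have hw0 (ω : Ω) (v : V) : 0 ≤ w ω v := (hw ω).1 v
  have htail (ω : Ω) (hω : p ω ≠ 0) :
      mean (outputLaw p w) ({v | γ ≤ density p w ω v}.indicator (density p w ω)) =
        prob (w ω) {v | γ ≤ density p w ω v} := by
    rw [prob, ← mean_outputLaw_density_mul hp.1 hw0 hω]
    refine congrArg _ (funext fun v => ?_)
    rw [← Set.indicator_mul_right]
    simp only [Pi.one_apply, mul_one]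
  calc _ ≤ mean p fun ω => √(γ / Fintype.card J) + 2 * prob (w ω) {v | γ ≤ density p w ω v} :=
        mean_le_mean_of_ne_zero hp.1 fun ω hω => by
          rw [← htail ω hω]
          exact mean_iidLaw_abs_expect_sub_one_le (outputLaw_mem_stdSimplex hp hw)
            (density_nonneg hp.1 hw0 ω) (mean_outputLaw_density hp.1 hw hω) hγ
    _ = coveringError J p w γ := by
        rw [mean_add, mean_const hp.2, mean_const_mul, coveringError, prob, mean_compProd]
        rfl

end SoftCovering

section LikelihoodEncoder

variable {J V : Type*} [Fintype J] {s : V → ℝ}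

/-- The likelihood encoder: an index of the codebook `C` is drawn with probability proportional to
the likelihood of its codeword, and uniformly if all likelihoods vanish. -/
noncomputable def likelihoodEncoder (s : V → ℝ) (C : J → V) (j : J) : ℝ :=
  if ∑ i, s (C i) = 0 then (Fintype.card J : ℝ)⁻¹ else s (C j) / ∑ i, s (C i)

variable [Nonempty J]

lemma likelihoodEncoder_mem_stdSimplex (hs : ∀ v, 0 ≤ s v) (C : J → V) :
    likelihoodEncoder s C ∈ stdSimplex ℝ J := by
  by_cases h : ∑ i, s (C i) = 0
  · simp [stdSimplex, likelihoodEncoder, h]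
  · refine ⟨fun j => ?_, ?_⟩
    · simpa only [likelihoodEncoder, if_neg h] using
        div_nonneg (hs _) (sum_nonneg fun i _ => hs (C i))
    · simp only [likelihoodEncoder, if_neg h, ← sum_div, div_self h]

lemma sum_abs_likelihoodEncoder_sub (hs : ∀ v, 0 ≤ s v) (C : J → V) :
    ∑ j, |likelihoodEncoder s C j - s (C j) / Fintype.card J| = |𝔼 j, s (C j) - 1| := by
  by_cases h : ∑ i, s (C i) = 0
  · have hzero (j : J) : s (C j) = 0 :=
      (sum_eq_zero_iff_of_nonneg fun i _ => hs (C i)).1 h j (mem_univ j)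
    simp [likelihoodEncoder, hzero]
  · have hterm (j : J) : |likelihoodEncoder s C j - s (C j) / Fintype.card J| =
        s (C j) * |(∑ i, s (C i))⁻¹ - (Fintype.card J : ℝ)⁻¹| := by
      rw [likelihoodEncoder, if_neg h, div_eq_mul_inv, div_eq_mul_inv, ← mul_sub, abs_mul,
        abs_of_nonneg (hs _)]
    simp only [hterm, ← sum_mul]
    rw [← abs_of_nonneg (sum_nonneg fun i _ => hs (C i)), ← abs_mul,
      abs_of_nonneg (sum_nonneg fun i _ => hs (C i)), mul_sub, mul_inv_cancel₀ h, abs_sub_comm,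
      Fintype.expect_eq_sum_div_card, div_eq_mul_inv]

lemma mean_likelihoodEncoder_le (hs : ∀ v, 0 ≤ s v) (C : J → V) {β : J → ℝ} (hβ : ∀ j, 0 ≤ β j)
    (hβ1 : ∀ j, β j ≤ 1) :
    mean (likelihoodEncoder s C) β ≤ 𝔼 j, s (C j) * β j + |𝔼 j, s (C j) - 1| := by
  rw [← sum_abs_likelihoodEncoder_sub hs, Fintype.expect_eq_sum_div_card, sum_div,
    ← sum_add_distrib]
  refine sum_le_sum fun j _ => ?_
  calc likelihoodEncoder s C j * β j
      = s (C j) * β j / Fintype.card J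
          + (likelihoodEncoder s C j - s (C j) / Fintype.card J) * β j := by ring
    _ ≤ s (C j) * β j / Fintype.card J + |likelihoodEncoder s C j - s (C j) / Fintype.card J| := by
        gcongr
        calc _ ≤ |likelihoodEncoder s C j - s (C j) / Fintype.card J| * β j :=
              mul_le_mul_of_nonneg_right (le_abs_self _) (hβ j)
          _ ≤ _ := mul_le_of_le_one_right (abs_nonneg _) (hβ1 j)

lemma mean_likelihoodEncoder_pair_le {J' V' : Type*} [Fintype J'] [Nonempty J'] {s' : V' → ℝ}
    (hs : ∀ v, 0 ≤ s v) (hs' : ∀ v, 0 ≤ s' v) (C : J → V) (C' : J' → V') {β : J → J' → ℝ}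
    (hβ : ∀ j j', 0 ≤ β j j') (hβ1 : ∀ j j', β j j' ≤ 1) :
    mean (likelihoodEncoder s C) (fun j => mean (likelihoodEncoder s' C') (β j)) ≤
      𝔼 j, 𝔼 j', s (C j) * (s' (C' j') * β j j') +
        (|𝔼 j, s (C j) - 1| + (𝔼 j, s (C j)) * |𝔼 j', s' (C' j') - 1|) := by
  have henc' := likelihoodEncoder_mem_stdSimplex hs' C'
  have hmean1 (j : J) : mean (likelihoodEncoder s' C') (β j) ≤ 1 :=
    (mean_le_mean henc'.1 (hβ1 j)).trans_eq (mean_const henc'.2 1)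
  have hinner : 𝔼 j, s (C j) * mean (likelihoodEncoder s' C') (β j) ≤
      𝔼 j, s (C j) * (𝔼 j', s' (C' j') * β j j' + |𝔼 j', s' (C' j') - 1|) :=
    expect_le_expect fun j _ =>
      mul_le_mul_of_nonneg_left (mean_likelihoodEncoder_le hs' C' (hβ j) (hβ1 j)) (hs _)
  have houter := mean_likelihoodEncoder_le hs C
    (fun j => mean_nonneg henc'.1 (hβ j)) hmean1
  simp only [mul_add, expect_add_distrib, ← expect_mul, mul_expect] at hinner
  linarith

lemma mean_iidLaw_likelihoodEncoder_le {J' V' : Type*} [Fintype J'] [Nonempty J'] [DecidableEq J]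
    [DecidableEq J'] [Fintype V] [Fintype V'] {q : V → ℝ} {q' s' : V' → ℝ}
    (hq : q ∈ stdSimplex ℝ V) (hq' : q' ∈ stdSimplex ℝ V') (hs : ∀ v, 0 ≤ s v)
    (hs' : ∀ v, 0 ≤ s' v) (hs1 : mean q s = 1) {β : (J → V) → (J' → V') → J → J' → ℝ}
    (hβ : ∀ C C' j j', 0 ≤ β C C' j j') (hβ1 : ∀ C C' j j', β C C' j j' ≤ 1) :
    mean (iidLaw J q) (fun C => mean (iidLaw J' q') fun C' =>
        mean (likelihoodEncoder s C) fun j => mean (likelihoodEncoder s' C') (β C C' j)) ≤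
      mean (iidLaw J q) (fun C => mean (iidLaw J' q') fun C' =>
        𝔼 j, 𝔼 j', s (C j) * (s' (C' j') * β C C' j j')) +
      (mean (iidLaw J q) (fun C => |𝔼 j, s (C j) - 1|) +
        mean (iidLaw J' q') fun C' => |𝔼 j', s' (C' j') - 1|) := by
  have hqJ := iidLaw_mem_stdSimplex (ι := J) hq
  have hqJ' := iidLaw_mem_stdSimplex (ι := J') hq'
  refine (mean_le_mean hqJ.1 fun C => mean_le_mean hqJ'.1 fun C' =>
    mean_likelihoodEncoder_pair_le hs hs' C C' (hβ C C') (hβ1 C C')).trans_eq ?_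
  simp only [mean_add, mean_const hqJ'.2, mean_const_mul, mean_mul_const, mean_expect,
    mean_iidLaw_apply hq.2, hs1, Fintype.expect_const, one_mul]

end LikelihoodEncoder

section RandomCodewords

variable {Ω V J : Type*} [Fintype Ω] [Fintype V] [Fintype J] [DecidableEq J]
  {p : Ω → ℝ} {w : Ω → V → ℝ}

/-- Weighting a random codebook by the density at its `j`-th entry gives that entry the law `w ω`
and leaves the others untouched. -/
lemma mean_iidLaw_density_mul (hp : p ∈ stdSimplex ℝ Ω) (hw : ∀ ω, w ω ∈ stdSimplex ℝ V) {ω : Ω}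
    (hω : p ω ≠ 0) (i j : J) (h : V → ℝ) :
    mean (iidLaw J (outputLaw p w)) (fun C => density p w ω (C j) * h (C i)) =
      mean (if i = j then w ω else outputLaw p w) h := by
  have hq := (outputLaw_mem_stdSimplex hp hw).2
  split_ifs with hij
  · rw [hij, mean_iidLaw_apply hq j fun v => density p w ω v * h v,
      mean_outputLaw_density_mul hp.1 (fun ω => (hw ω).1) hω]
  · rw [mean_iidLaw_apply_mul_apply hq (Ne.symm hij), mean_outputLaw_density hp.1 hw hω, one_mul]

variable {V' J' : Type*} [Fintype V'] [Fintype J'] [DecidableEq J'] {w' : Ω → V' → ℝ}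

lemma mean_iidLaw_iidLaw_density_mul (hp : p ∈ stdSimplex ℝ Ω) (hw : ∀ ω, w ω ∈ stdSimplex ℝ V)
    (hw' : ∀ ω, w' ω ∈ stdSimplex ℝ V') (i j : J) (i' j' : J') (h : Ω → V × V' → ℝ) :
    mean p (fun ω => mean (iidLaw J (outputLaw p w)) fun C =>
        mean (iidLaw J' (outputLaw p w')) fun C' =>
          density p w ω (C j) * (density p w' ω (C' j') * h ω (C i, C' i'))) =
      mean p fun ω => mean (if i = j then w ω else outputLaw p w) fun v =>
        mean (if i' = j' then w' ω else outputLaw p w') fun v' => h ω (v, v') := by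
  refine mean_congr_of_ne_zero fun ω hω => ?_
  have hinner (v : V) := mean_iidLaw_density_mul hp hw' hω i' j' fun v' => h ω (v, v')
  simp only [mean_const_mul, hinner]
  exact mean_iidLaw_density_mul hp hw hω i j fun v =>
    mean (if i' = j' then w' ω else outputLaw p w') fun v' => h ω (v, v')

lemma mean_selected_pair (hp : p ∈ stdSimplex ℝ Ω) (hw : ∀ ω, w ω ∈ stdSimplex ℝ V)
    (hw' : ∀ ω, w' ω ∈ stdSimplex ℝ V') (j : J) (j' : J') (h : Ω × (V × V') → ℝ) :
    mean p (fun ω => mean (iidLaw J (outputLaw p w)) fun C =>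
        mean (iidLaw J' (outputLaw p w')) fun C' =>
          density p w ω (C j) * (density p w' ω (C' j') * h (ω, (C j, C' j')))) =
      mean (compProd p (prodKernel w w')) h := by
  rw [mean_iidLaw_iidLaw_density_mul hp hw hw' j j j' j' fun ω v => h (ω, v)]
  simp only [if_true, mean_compProd, prodKernel, mean_prodLaw]

lemma mean_unselected_pair (hp : p ∈ stdSimplex ℝ Ω) (hw : ∀ ω, w ω ∈ stdSimplex ℝ V)
    (hw' : ∀ ω, w' ω ∈ stdSimplex ℝ V') {i j : J} {i' j' : J'} (hij : ¬(i = j ∧ i' = j'))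
    (h : V × V' → ℝ) :
    mean p (fun ω => mean (iidLaw J (outputLaw p w)) fun C =>
        mean (iidLaw J' (outputLaw p w')) fun C' =>
          density p w ω (C j) * (density p w' ω (C' j') * h (C i, C' i'))) =
      mean (prodLaw (outputLaw p w) (outputLaw p w')) h := by
  rw [mean_iidLaw_iidLaw_density_mul hp hw hw' i j i' j' fun _ => h, mean_prodLaw]
  rcases eq_or_ne i j with hi | hi
  · have hi' : i' ≠ j' := fun hi' => hij ⟨hi, hi'⟩
    simp only [if_pos hi, if_neg hi', mean_outputLaw p w]
  · by_cases hi' : i' = j'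
    · simp only [if_neg hi, if_pos hi', mean_outputLaw p w']
      exact mean_comm _ _ _
    · simp only [if_neg hi, if_neg hi', mean_const hp.2]

end RandomCodewords

section Codes

/-- A distributed code with stochastic encoders for the observations in `A` and `A'`, and a
deterministic joint decoder with values in `B`. -/
structure DistributedCode (A A' M M' B : Type*) [Fintype M] [Fintype M'] where
  enc : A → M → ℝ
  enc' : A' → M' → ℝ
  dec : M → M' → B
  enc_mem : ∀ x, enc x ∈ stdSimplex ℝ M
  enc'_mem : ∀ x, enc' x ∈ stdSimplex ℝ M'

namespace DistributedCode

variable {A A' M M' B B' : Type*} [Fintype M] [Fintype M']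

/-- The conditional expectation of a function of the decoder's output given the observations. -/
noncomputable def condMean (c : DistributedCode A A' M M' B) (x : A) (x' : A') (f : B → ℝ) : ℝ :=
  mean (c.enc x) fun m => mean (c.enc' x') fun m' => f (c.dec m m')

/-- The code obtained by post-processing the decoder's output. -/
def map (c : DistributedCode A A' M M' B) (φ : B → B') : DistributedCode A A' M M' B' where
  enc := c.enc
  enc' := c.enc'
  dec m m' := φ (c.dec m m')
  enc_mem := c.enc_mem
  enc'_mem := c.enc'_mem

end DistributedCode

variable {A A' V V' I I' L L' : Type*}

/-- The index of a codeword consists of a bin `i : I` and a position `l : L` in the bin; the binned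
encoder reports the bin of the index drawn by the likelihood encoder. -/
noncomputable def binnedEncoder [Fintype I] [Fintype L] (s : V → ℝ) (C : I × L → V) (i : I) : ℝ :=
  ∑ l, likelihoodEncoder s C (i, l)

lemma mean_binnedEncoder [Fintype I] [Fintype L] (s : V → ℝ) (C : I × L → V) (f : I → ℝ) :
    mean (binnedEncoder s C) f = mean (likelihoodEncoder s C) fun j => f j.1 := by
  simp only [mean, binnedEncoder, Fintype.sum_prod_type, sum_mul]

lemma binnedEncoder_mem_stdSimplex [Fintype I] [Fintype L] [Nonempty I] [Nonempty L] {s : V → ℝ}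
    (hs : ∀ v, 0 ≤ s v) (C : I × L → V) : binnedEncoder s C ∈ stdSimplex ℝ I := by
  have h := likelihoodEncoder_mem_stdSimplex hs C
  refine ⟨fun i => sum_nonneg fun l _ => h.1 _, ?_⟩
  simpa only [binnedEncoder, ← Fintype.sum_prod_type'] using h.2

/-- The decoder that looks in the two received bins for a pair of codewords passing the test `T`,
and settles for an arbitrary pair in these bins if there is none. -/
noncomputable def binDecoder [Nonempty L] [Nonempty L'] (T : Set (V × V')) (C : I × L → V)
    (C' : I' × L' → V') (i : I) (i' : I') : V × V' :=
  let l := Classical.epsilon fun l : L × L' => (C (i, l.1), C' (i', l.2)) ∈ T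
  (C (i, l.1), C' (i', l.2))

lemma indicator_binDecoder_le [Fintype L] [Fintype L'] [DecidableEq L] [DecidableEq L']
    [Nonempty L] [Nonempty L'] (T B : Set (V × V')) (C : I × L → V) (C' : I' × L' → V')
    (j : I × L) (j' : I' × L') :
    B.indicator (1 : V × V' → ℝ) (binDecoder T C C' j.1 j'.1) ≤
      B.indicator 1 (C j, C' j') + Tᶜ.indicator 1 (C j, C' j') +
        ∑ l ∈ univ.erase (j.2, j'.2), T.indicator 1 (C (j.1, l.1), C' (j'.1, l.2)) := by
  set wrong := fun l : L × L' => T.indicator (1 : V × V' → ℝ) (C (j.1, l.1), C' (j'.1, l.2))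
  have hwrong (l : L × L') : 0 ≤ wrong l := indicator_one_nonneg T _
  have hsum : 0 ≤ ∑ l ∈ univ.erase (j.2, j'.2), wrong l := sum_nonneg fun l _ => hwrong l
  have hB := indicator_one_nonneg B (C j, C' j')
  have hT := indicator_one_nonneg Tᶜ (C j, C' j')
  have hle := indicator_one_le_one B (binDecoder T C C' j.1 j'.1)
  by_cases hj : (C j, C' j') ∈ T
  · have hspec := Classical.epsilon_spec
      (p := fun l : L × L' => (C (j.1, l.1), C' (j'.1, l.2)) ∈ T) ⟨(j.2, j'.2), hj⟩
    set l := Classical.epsilon fun l : L × L' => (C (j.1, l.1), C' (j'.1, l.2)) ∈ T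
    have hdec : binDecoder T C C' j.1 j'.1 = (C (j.1, l.1), C' (j'.1, l.2)) := rfl
    by_cases hlj : l = (j.2, j'.2)
    · rw [hdec, hlj]
      linarith
    · have hone : 1 ≤ ∑ l ∈ univ.erase (j.2, j'.2), wrong l := by
        have hl : wrong l = 1 := Set.indicator_of_mem hspec _
        rw [← hl]
        exact single_le_sum (fun l _ => hwrong l) (mem_erase.2 ⟨hlj, mem_univ l⟩)
      linarith
  · rw [Set.indicator_of_mem (Set.mem_compl hj), Pi.one_apply]
    linarith

/-- The code that applies binned likelihood encoders to the codebooks `C` and `C'`. -/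
noncomputable def binningCode [Fintype I] [Fintype I'] [Fintype L] [Fintype L'] [Nonempty I]
    [Nonempty I'] [Nonempty L] [Nonempty L'] {s : A → V → ℝ} {s' : A' → V' → ℝ}
    (hs : ∀ x v, 0 ≤ s x v) (hs' : ∀ x v, 0 ≤ s' x v) (T : Set (V × V')) (C : I × L → V)
    (C' : I' × L' → V') : DistributedCode A A' I I' (V × V') where
  enc x := binnedEncoder (s x) C
  enc' x := binnedEncoder (s' x) C'
  dec := binDecoder T C C'
  enc_mem x := binnedEncoder_mem_stdSimplex (hs x) C
  enc'_mem x := binnedEncoder_mem_stdSimplex (hs' x) C'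

lemma condMean_binningCode [Fintype I] [Fintype I'] [Fintype L] [Fintype L'] [Nonempty I]
    [Nonempty I'] [Nonempty L] [Nonempty L'] {s : A → V → ℝ} {s' : A' → V' → ℝ}
    (hs : ∀ x v, 0 ≤ s x v) (hs' : ∀ x v, 0 ≤ s' x v) (T : Set (V × V')) (C : I × L → V)
    (C' : I' × L' → V') (x : A) (x' : A') (f : V × V' → ℝ) :
    (binningCode hs hs' T C C').condMean x x' f =
      mean (likelihoodEncoder (s x) C) fun j => mean (likelihoodEncoder (s' x') C') fun j' =>
        f (binDecoder T C C' j.1 j'.1) := by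
  simp only [DistributedCode.condMean, binningCode, mean_binnedEncoder]

end Codes

section OneShot

variable {Ω A A' V V' I I' L L' : Type*} [Fintype Ω] [Fintype V] [Fintype V'] [Fintype I]
  [Fintype I'] [Fintype L] [Fintype L'] [Nonempty L] [Nonempty L'] {p : Ω → ℝ} {w : Ω → V → ℝ}
  {w' : Ω → V' → ℝ}

lemma mean_indicator_binDecoder_le [DecidableEq I] [DecidableEq I'] [DecidableEq L]
    [DecidableEq L'] (hp : p ∈ stdSimplex ℝ Ω) (hw : ∀ ω, w ω ∈ stdSimplex ℝ V)
    (hw' : ∀ ω, w' ω ∈ stdSimplex ℝ V') (T : Set (V × V')) (B : Set (Ω × (V × V')))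
    (j : I × L) (j' : I' × L') :
    mean p (fun ω => mean (iidLaw (I × L) (outputLaw p w)) fun C =>
        mean (iidLaw (I' × L') (outputLaw p w')) fun C' =>
          density p w ω (C j) * (density p w' ω (C' j') *
            B.indicator 1 (ω, binDecoder T C C' j.1 j'.1))) ≤
      prob (compProd p (prodKernel w w')) B + prob (outputLaw p (prodKernel w w')) Tᶜ +
        (Fintype.card L * Fintype.card L' - 1) *
          prob (prodLaw (outputLaw p w) (outputLaw p w')) T := by
  have hq := iidLaw_mem_stdSimplex (ι := I × L) (outputLaw_mem_stdSimplex hp hw)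
  have hq' := iidLaw_mem_stdSimplex (ι := I' × L') (outputLaw_mem_stdSimplex hp hw')
  have hd := density_nonneg hp.1 fun ω => (hw ω).1
  have hd' := density_nonneg hp.1 fun ω => (hw' ω).1
  have hcard : (#(univ.erase (j.2, j'.2)) : ℝ) = Fintype.card L * Fintype.card L' - 1 := by
    rw [cast_card_erase_of_mem (mem_univ _), card_univ, Fintype.card_prod, Nat.cast_mul]
  refine (mean_le_mean hp.1 fun ω => mean_le_mean hq.1 fun C => mean_le_mean hq'.1 fun C' =>
    mul_le_mul_of_nonneg_left (mul_le_mul_of_nonneg_left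
      (indicator_binDecoder_le T {v | (ω, v) ∈ B} C C' j j') (hd' ω _)) (hd ω _)).trans_eq ?_
  simp only [mul_add, mul_sum, mean_add, mean_sum]
  have hwrong (l : L × L') (hl : l ∈ univ.erase (j.2, j'.2)) :=
    mean_unselected_pair hp hw hw' (i := (j.1, l.1)) (j := j) (i' := (j'.1, l.2)) (j' := j')
      (fun h => (mem_erase.1 hl).1 (Prod.ext (congrArg Prod.snd h.1 :) (congrArg Prod.snd h.2 :)))
      (T.indicator 1)
  rw [sum_congr rfl hwrong, sum_const, nsmul_eq_mul, hcard,
    ← prob_compProd_snd p (prodKernel w w') Tᶜ]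
  congr 2
  · exact mean_selected_pair hp hw hw' j j' (B.indicator 1)
  · exact mean_selected_pair hp hw hw' j j' ((Prod.snd ⁻¹' Tᶜ).indicator 1)

variable [Nonempty I] [Nonempty I']

lemma mean_likelihoodEncoder_binDecoder_le [DecidableEq I] [DecidableEq I'] [DecidableEq L]
    [DecidableEq L'] (hp : p ∈ stdSimplex ℝ Ω) (hw : ∀ ω, w ω ∈ stdSimplex ℝ V)
    (hw' : ∀ ω, w' ω ∈ stdSimplex ℝ V') (T : Set (V × V')) (B : Set (Ω × (V × V'))) {γ γ' : ℝ}
    (hγ : 0 ≤ γ) (hγ' : 0 ≤ γ') :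
    mean (iidLaw (I × L) (outputLaw p w)) (fun C =>
        mean (iidLaw (I' × L') (outputLaw p w')) fun C' => mean p fun ω =>
          mean (likelihoodEncoder (density p w ω) C) fun j =>
            mean (likelihoodEncoder (density p w' ω) C') fun j' =>
              B.indicator 1 (ω, binDecoder T C C' j.1 j'.1)) ≤
      prob (compProd p (prodKernel w w')) B + prob (outputLaw p (prodKernel w w')) Tᶜ +
        (Fintype.card L * Fintype.card L' - 1) *
          prob (prodLaw (outputLaw p w) (outputLaw p w')) T +
        (coveringError (I × L) p w γ + coveringError (I' × L') p w' γ') := by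
  have hd := density_nonneg hp.1 fun ω => (hw ω).1
  have hd' := density_nonneg hp.1 fun ω => (hw' ω).1
  simp only [mean_comm _ p]
  refine (mean_le_mean_of_ne_zero hp.1 fun ω hω => mean_iidLaw_likelihoodEncoder_le
    (outputLaw_mem_stdSimplex hp hw) (outputLaw_mem_stdSimplex hp hw') (hd ω) (hd' ω)
    (mean_outputLaw_density hp.1 hw hω)
    (β := fun C C' j j' => B.indicator 1 (ω, binDecoder T C C' j.1 j'.1))
    (fun _ _ _ _ => indicator_one_nonneg B _) fun _ _ _ _ => indicator_one_le_one B _).trans ?_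
  simp only [mean_add, mean_expect]
  gcongr
  · exact expect_le univ_nonempty fun j _ => expect_le univ_nonempty fun j' _ =>
      mean_indicator_binDecoder_le hp hw hw' T B j j'
  · exact mean_mean_iidLaw_abs_expect_density_sub_one_le hp hw hγ
  · exact mean_mean_iidLaw_abs_expect_density_sub_one_le hp hw' hγ'

/-- The codebooks are drawn i.i.d. from the output laws of the two test channels; some pair of
codebooks does at least as well as the average. -/
lemma exists_distributedCode_mean_condMean_le {k : A → V → ℝ} {k' : A' → V' → ℝ}
    (hp : p ∈ stdSimplex ℝ Ω) (hk : ∀ x, k x ∈ stdSimplex ℝ V) (hk' : ∀ x, k' x ∈ stdSimplex ℝ V')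
    (π : Ω → A) (π' : Ω → A') (hw : ∀ ω, w ω = k (π ω)) (hw' : ∀ ω, w' ω = k' (π' ω))
    (B : Set (Ω × (V × V'))) {β γ γ' : ℝ} (hβ : 0 < β) (hγ : 0 ≤ γ) (hγ' : 0 ≤ γ') :
    ∃ c : DistributedCode A A' I I' (V × V'),
      mean p (fun ω => c.condMean (π ω) (π' ω) fun v => B.indicator 1 (ω, v)) ≤
        prob (compProd p (prodKernel w w')) B +
          prob (outputLaw p (prodKernel w w')) {v | infoRatio (outputLaw p (prodKernel w w')) v ≤ β}
          + (Fintype.card L * Fintype.card L' - 1) / β +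
          (coveringError (I × L) p w γ + coveringError (I' × L') p w' γ') := by
  classical
  have hwmem (ω : Ω) : w ω ∈ stdSimplex ℝ V := hw ω ▸ hk _
  have hwmem' (ω : Ω) : w' ω ∈ stdSimplex ℝ V' := hw' ω ▸ hk' _
  set Q := outputLaw p (prodKernel w w')
  have hq := outputLaw_mem_stdSimplex hp hwmem
  have hq' := outputLaw_mem_stdSimplex hp hwmem'
  set T := {v | β < infoRatio Q v}
  obtain ⟨⟨C, C'⟩, hC⟩ := exists_le_mean (prodLaw_mem_stdSimplex
      (iidLaw_mem_stdSimplex (ι := I × L) hq) (iidLaw_mem_stdSimplex (ι := I' × L') hq')) fun C =>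
    mean p fun ω => mean (likelihoodEncoder (density p w ω) C.1) fun j =>
      mean (likelihoodEncoder (density p w' ω) C.2) fun j' =>
        B.indicator 1 (ω, binDecoder T C.1 C.2 j.1 j'.1)
  rw [mean_prodLaw] at hC
  have hQ := outputLaw_mem_stdSimplex hp (prodKernel_mem_stdSimplex hwmem hwmem')
  have htest : prob (prodLaw (outputLaw p w) (outputLaw p w')) T ≤ β⁻¹ := by
    simpa only [Q, sum_outputLaw_prodKernel_right hwmem', sum_outputLaw_prodKernel_left hwmem]
      using prob_prodLaw_lt_infoRatio_le hQ hβ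
  have hcard : (0 : ℝ) ≤ Fintype.card L * Fintype.card L' - 1 :=
    sub_nonneg.2 (one_le_mul_of_one_le_of_one_le (mod_cast Fintype.card_pos)
      (mod_cast Fintype.card_pos))
  refine ⟨binningCode (s := fun x v => k x v / outputLaw p w v)
    (s' := fun x v => k' x v / outputLaw p w' v) (fun x v => div_nonneg ((hk x).1 v) (hq.1 v))
    (fun x v => div_nonneg ((hk' x).1 v) (hq'.1 v)) T C C', ?_⟩
  simp only [condMean_binningCode, ← hw, ← hw']
  refine hC.trans ((mean_likelihoodEncoder_binDecoder_le hp hwmem hwmem' T B hγ hγ').trans ?_)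
  have hTc : Tᶜ = {v | infoRatio Q v ≤ β} := Set.ext fun v => not_lt (a := β) (b := infoRatio Q v)
  rw [hTc, div_eq_mul_inv]
  gcongr

end OneShot

section Information

variable {A B Ω U V : Type*} [Fintype A] [Fintype B] [Fintype Ω] [Fintype U] [Fintype V]
  {p : Ω → ℝ} {w : Ω → U → ℝ} {w' : Ω → V → ℝ}

lemma mutInf_eq_mean_logb_infoRatio (Q : A × B → ℝ) :
    mutInf (fun a b => Q (a, b)) = mean Q fun v => Real.logb 2 (infoRatio Q v) :=
  (Fintype.sum_prod_type fun v => Q v * Real.logb 2 (infoRatio Q v)).symm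

lemma mutInf_comm (P : A → B → ℝ) : mutInf (fun b a => P a b) = mutInf P := by
  simp only [mutInf, mul_comm (∑ a, P a _)]
  exact sum_comm

lemma mutInf_compProd (hw : ∀ ω, w ω ∈ stdSimplex ℝ U) :
    mutInf (fun ω u => compProd p w (ω, u)) =
      mean (compProd p w) fun x => Real.logb 2 (density p w x.1 x.2) := by
  rw [mutInf_eq_mean_logb_infoRatio]
  refine mean_congr_of_ne_zero fun x hx => congrArg (Real.logb 2) ?_
  have hfst : ∑ u, compProd p w (x.1, u) = p x.1 := by
    simp only [compProd, ← mul_sum, (hw _).2, mul_one]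
  rw [infoRatio, hfst]
  exact mul_div_mul_left _ _ (left_ne_zero_of_mul hx)

lemma mean_compProd_prodKernel_left (hw' : ∀ ω, w' ω ∈ stdSimplex ℝ V) (f : Ω × U → ℝ) :
    mean (compProd p (prodKernel w w')) (fun x => f (x.1, x.2.1)) = mean (compProd p w) f := by
  simp only [mean_compProd, prodKernel, mean_prodLaw, mean_const (hw' _).2]

lemma mean_compProd_prodKernel_right (hw : ∀ ω, w ω ∈ stdSimplex ℝ U) (f : Ω × V → ℝ) :
    mean (compProd p (prodKernel w w')) (fun x => f (x.1, x.2.2)) = mean (compProd p w') f := by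
  simp only [mean_compProd, prodKernel, mean_prodLaw, mean_const (hw _).2]

lemma mean_compProd_snd (p : Ω → ℝ) (w : Ω → U → ℝ) (f : U → ℝ) :
    mean (compProd p w) (fun x => f x.2) = mean (outputLaw p w) f := by
  rw [mean_compProd, mean_outputLaw]

lemma density_pos_and_infoRatio_pos (hp : ∀ ω, 0 ≤ p ω) (hw : ∀ ω, w ω ∈ stdSimplex ℝ U)
    (hw' : ∀ ω, w' ω ∈ stdSimplex ℝ V) {x : Ω × (U × V)}
    (hx : compProd p (prodKernel w w') x ≠ 0) :
    0 < density p w x.1 x.2.1 ∧ 0 < density p w' x.1 x.2.2 ∧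
      0 < infoRatio (outputLaw p (prodKernel w w')) x.2 := by
  have hprod (ω : Ω) := (prodKernel_mem_stdSimplex hw hw' ω).1
  have hpx := left_ne_zero_of_mul hx
  have hwx := right_ne_zero_of_mul hx
  exact ⟨density_pos hp (fun ω => (hw ω).1) (x := (x.1, x.2.1))
      (mul_ne_zero hpx (left_ne_zero_of_mul hwx)),
    density_pos hp (fun ω => (hw' ω).1) (x := (x.1, x.2.2))
      (mul_ne_zero hpx (right_ne_zero_of_mul hwx)),
    infoRatio_pos (fun v => mean_nonneg hp fun ω => hprod ω v) (outputLaw_pos hp hprod hx).ne'⟩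

lemma div_outputLaw_div_infoRatio (hw : ∀ ω, w ω ∈ stdSimplex ℝ U)
    (hw' : ∀ ω, w' ω ∈ stdSimplex ℝ V) (v : U × V) (c : ℝ) (hq : outputLaw p w v.1 ≠ 0) :
    c / outputLaw p w v.1 / infoRatio (outputLaw p (prodKernel w w')) v =
      c * outputLaw p w' v.2 / outputLaw p (prodKernel w w') v := by
  rw [infoRatio, sum_outputLaw_prodKernel_right hw', sum_outputLaw_prodKernel_left hw,
    div_div_div_eq, mul_left_comm, mul_div_mul_left _ _ hq]

/-- `I(Ω; U, V) = I(Ω; U) + I(Ω; V) - I(U; V)` when `U` and `V` are conditionally independent given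
`Ω`. -/
lemma mutInf_compProd_prodKernel (hp : ∀ ω, 0 ≤ p ω) (hw : ∀ ω, w ω ∈ stdSimplex ℝ U)
    (hw' : ∀ ω, w' ω ∈ stdSimplex ℝ V) :
    mutInf (fun ω v => compProd p (prodKernel w w') (ω, v)) =
      mutInf (fun ω u => compProd p w (ω, u)) + mutInf (fun ω v => compProd p w' (ω, v)) -
        mutInf fun u v => outputLaw p (prodKernel w w') (u, v) := by
  rw [mutInf_compProd (prodKernel_mem_stdSimplex hw hw'), mutInf_compProd hw, mutInf_compProd hw',
    mutInf_eq_mean_logb_infoRatio,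
    ← mean_compProd_prodKernel_left hw' fun x => Real.logb 2 (density p w x.1 x.2),
    ← mean_compProd_prodKernel_right hw fun x => Real.logb 2 (density p w' x.1 x.2),
    ← mean_compProd_snd, ← mean_add, ← mean_sub]
  refine mean_congr_of_ne_zero fun x hx => ?_
  obtain ⟨hd, hd', hr⟩ := density_pos_and_infoRatio_pos hp hw hw' hx
  rw [← Real.logb_mul hd.ne' hd'.ne', ← Real.logb_div (mul_pos hd hd').ne' hr.ne']
  have hq := (div_ne_zero_iff.1 hd.ne').2
  have hq' := (div_ne_zero_iff.1 hd'.ne').2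
  simp only [density] at hq hq' ⊢
  rw [mul_comm, ← mul_div_assoc, div_outputLaw_div_infoRatio hw hw' _ _ hq, mul_right_comm,
    div_mul_cancel₀ _ hq', mul_comm]
  rfl

lemma mean_marginal (e : A × B ≃ Ω) (P : Ω × V → ℝ) (g : A → V → ℝ) :
    mean P (fun x => g (e.symm x.1).1 x.2) = ∑ a, ∑ v, (∑ b, P (e (a, b), v)) * g a v := by
  simp only [mean, Fintype.sum_prod_type, ← e.sum_comp, Equiv.symm_apply_apply, sum_mul]
  exact sum_congr rfl fun a _ => sum_comm

/-- `I(A; U | V) = I(Ω; U) - I(U; V)` when `Ω = (A, B)` and `U - A - Ω - V` is a Markov chain. -/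
lemma condMutInf_eq_mutInf_sub_mutInf (hp : ∀ ω, 0 ≤ p ω) (e : A × B ≃ Ω) {k : A → U → ℝ}
    (hk : ∀ a, k a ∈ stdSimplex ℝ U) (hwk : ∀ ω, w ω = k (e.symm ω).1)
    (hw' : ∀ ω, w' ω ∈ stdSimplex ℝ V) :
    condMutInf (fun a u v => ∑ b, compProd p (prodKernel w w') (e (a, b), (u, v))) =
      mutInf (fun ω u => compProd p w (ω, u)) -
        mutInf fun u v => outputLaw p (prodKernel w w') (u, v) := by
  have hw (ω : Ω) : w ω ∈ stdSimplex ℝ U := hwk ω ▸ hk _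
  set Q := outputLaw p (prodKernel w w')
  set S : A → V → ℝ := fun a v => ∑ b, p (e (a, b)) * w' (e (a, b)) v
  have hT (a : A) (u : U) (v : V) :
      ∑ b, compProd p (prodKernel w w') (e (a, b), (u, v)) = k a u * S a v := by
    simp only [S, mul_sum, compProd, prodKernel, prodLaw, hwk, Equiv.symm_apply_apply,
      mul_left_comm]
  have hQ (u : U) (v : V) : ∑ a, k a u * S a v = Q (u, v) := by
    simp only [← hT, Q, outputLaw, mean, ← e.sum_comp, Fintype.sum_prod_type, compProd]
  have hS (a : A) (v : V) : ∑ u, k a u * S a v = S a v := by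
    rw [← sum_mul, (hk a).2, one_mul]
  have hSv (v : V) : ∑ a, S a v = outputLaw p w' v := by
    simp only [S, outputLaw, mean, ← e.sum_comp, Fintype.sum_prod_type]
  rw [mutInf_compProd hw, mutInf_eq_mean_logb_infoRatio,
    ← mean_compProd_prodKernel_left hw' fun x => Real.logb 2 (density p w x.1 x.2),
    ← mean_compProd_snd, ← mean_sub]
  have hmarginal := mean_marginal e (compProd p (prodKernel w w')) fun a (v : U × V) =>
    Real.logb 2 (k a v.1 / outputLaw p w v.1) - Real.logb 2 (infoRatio Q v)
  simp only [← hwk] at hmarginal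
  refine Eq.trans ?_ hmarginal.symm
  simp only [condMutInf, Fintype.sum_prod_type, hT, hQ, hS]
  refine sum_congr rfl fun a _ => sum_congr rfl fun u _ => sum_congr rfl fun v _ => ?_
  by_cases hauv : k a u * S a v = 0
  · rw [hauv, zero_mul, zero_mul]
  obtain ⟨b, -, hb⟩ := exists_ne_zero_of_sum_ne_zero (hT a u v ▸ hauv)
  obtain ⟨hd, -, hr⟩ := density_pos_and_infoRatio_pos hp hw hw' hb
  simp only [density, hwk, Equiv.symm_apply_apply] at hd
  congr 1
  rw [← Real.logb_div hd.ne' hr.ne',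
    div_outputLaw_div_infoRatio hw hw' (u, v) _ (div_ne_zero_iff.1 hd.ne').2, hSv, mul_right_comm,
    mul_comm (S a v), mul_div_mul_right _ _ (right_ne_zero_of_mul hauv)]

lemma exists_bin_rates {I₁ I₂ I R₁ R₂ : ℝ} (h₁ : I₁ - I < R₁) (h₂ : I₂ - I < R₂)
    (h : I₁ + I₂ - I < R₁ + R₂) :
    ∃ ρ₁ ρ₂ : ℝ, 0 ≤ ρ₁ ∧ 0 ≤ ρ₂ ∧ I₁ < R₁ + ρ₁ ∧ I₂ < R₂ + ρ₂ ∧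
      (ρ₁ = 0 ∧ ρ₂ = 0 ∨ ρ₁ + ρ₂ < I) := by
  obtain hI₁ | hI₁ := lt_or_ge I₁ R₁ <;> obtain hI₂ | hI₂ := lt_or_ge I₂ R₂
  · exact ⟨0, 0, le_rfl, le_rfl, by linarith, by linarith, .inl ⟨rfl, rfl⟩⟩
  · obtain ⟨ρ, hρ, hρI⟩ := exists_between (show I₂ - R₂ < I by linarith)
    exact ⟨0, ρ, le_rfl, by linarith, by linarith, by linarith, .inr (by linarith)⟩
  · obtain ⟨ρ, hρ, hρI⟩ := exists_between (show I₁ - R₁ < I by linarith)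
    exact ⟨ρ, 0, by linarith, le_rfl, by linarith, by linarith, .inr (by linarith)⟩
  · obtain ⟨ρ₁, hρ₁, hρ₁I⟩ := exists_between (show I₁ - R₁ < I - (I₂ - R₂) by linarith)
    obtain ⟨ρ₂, hρ₂, hρ₂I⟩ := exists_between (show I₂ - R₂ < I - ρ₁ by linarith)
    exact ⟨ρ₁, ρ₂, by linarith, by linarith, by linarith, by linarith, .inr (by linarith)⟩

end Information

section Asymptotics

lemma tendsto_two_rpow_nat_mul {x : ℝ} (hx : x < 0) :
    Tendsto (fun n : ℕ => (2 : ℝ) ^ (n * x)) atTop (𝓝 0) := by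
  have hpow (n : ℕ) : (2 : ℝ) ^ (n * x) = ((2 : ℝ) ^ x) ^ n := by
    rw [mul_comm, Real.rpow_mul_natCast zero_le_two]
  simp only [hpow]
  exact tendsto_pow_atTop_nhds_zero_of_lt_one (by positivity)
    (Real.rpow_lt_one_of_one_lt_of_neg one_lt_two hx)

lemma floor_two_rpow_pos {x : ℝ} (hx : 0 ≤ x) : 0 < ⌊(2 : ℝ) ^ x⌋₊ :=
  Nat.floor_pos.2 (Real.one_le_rpow one_le_two hx)

lemma two_rpow_half_le_floor {x : ℝ} (hx : 0 ≤ x) : (2 : ℝ) ^ x / 2 ≤ ⌊(2 : ℝ) ^ x⌋₊ := by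
  have hone : (1 : ℝ) ≤ ⌊(2 : ℝ) ^ x⌋₊ := by exact_mod_cast floor_two_rpow_pos hx
  have hlt := Nat.lt_floor_add_one ((2 : ℝ) ^ x)
  linarith

lemma two_rpow_div_ceil_mul_floor_le (r R : ℝ) {ρ : ℝ} (hρ : 0 ≤ ρ) :
    (2 : ℝ) ^ r / (⌈(2 : ℝ) ^ R⌉₊ * ⌊(2 : ℝ) ^ ρ⌋₊) ≤ 2 * 2 ^ (r - (R + ρ)) := by
  calc (2 : ℝ) ^ r / (⌈(2 : ℝ) ^ R⌉₊ * ⌊(2 : ℝ) ^ ρ⌋₊)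
      ≤ (2 : ℝ) ^ r / (2 ^ R * (2 ^ ρ / 2)) := by
        gcongr
        · exact Nat.le_ceil _
        · exact two_rpow_half_le_floor hρ
    _ = 2 * 2 ^ (r - (R + ρ)) := by
        rw [Real.rpow_sub two_pos, Real.rpow_add two_pos]
        field_simp

/-- Without bins (`ρ = ρ' = 0`) there is no wrong pair of codewords in the received bins. -/
lemma tendsto_floor_mul_floor_sub_one_div {ρ ρ' r : ℝ} (hρ : 0 ≤ ρ) (hρ' : 0 ≤ ρ')
    (h : ρ = 0 ∧ ρ' = 0 ∨ ρ + ρ' < r) :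
    Tendsto (fun n : ℕ => ((⌊(2 : ℝ) ^ (n * ρ)⌋₊ * ⌊(2 : ℝ) ^ (n * ρ')⌋₊ - 1) / 2 ^ (n * r) : ℝ))
      atTop (𝓝 0) := by
  obtain ⟨rfl, rfl⟩ | h := h
  · simp
  refine squeeze_zero (fun n => ?_) (fun n => ?_) (tendsto_two_rpow_nat_mul (sub_neg.2 h))
  · have hfloor := floor_two_rpow_pos (mul_nonneg n.cast_nonneg hρ)
    have hfloor' := floor_two_rpow_pos (mul_nonneg n.cast_nonneg hρ')
    refine div_nonneg (sub_nonneg.2 ?_) (by positivity)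
    exact_mod_cast Nat.mul_pos hfloor hfloor'
  · rw [mul_sub, mul_add, Real.rpow_sub two_pos, Real.rpow_add two_pos]
    gcongr
    refine (sub_le_self _ zero_le_one).trans ?_
    gcongr <;> exact Nat.floor_le (by positivity)

variable {Ω A A' V V' : Type*} [Fintype Ω] [Fintype V] [Fintype V'] {p : Ω → ℝ} {w : Ω → V → ℝ}
  {w' : Ω → V' → ℝ}

lemma prob_compProd_iid_le_density {ι : Type*} [Fintype ι] [DecidableEq ι] (p : Ω → ℝ)
    (w : Ω → V → ℝ) (γ : ℝ) :
    prob (compProd (iidLaw ι p) (iidKernel ι w))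
        {x | γ ≤ density (iidLaw ι p) (iidKernel ι w) x.1 x.2} =
      prob (iidLaw ι (compProd p w)) {C | γ ≤ ∏ i, density p w (C i).1 (C i).2} := by
  simp only [density_iid]
  rw [compProd_iid]
  exact prob_comp_equiv (Equiv.arrowProdEquivProdArrow ι (fun _ => Ω) fun _ => V).symm _
    {C | γ ≤ ∏ i, density p w (C i).1 (C i).2}

lemma prob_outputLaw_iid_infoRatio_le {ι : Type*} [Fintype ι] [DecidableEq ι] (p : Ω → ℝ)
    (hw : ∀ ω, w ω ∈ stdSimplex ℝ V) (hw' : ∀ ω, w' ω ∈ stdSimplex ℝ V') (β : ℝ) :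
    prob (outputLaw (iidLaw ι p) (prodKernel (iidKernel ι w) (iidKernel ι w')))
        {v | infoRatio (outputLaw (iidLaw ι p) (prodKernel (iidKernel ι w) (iidKernel ι w'))) v ≤
          β} =
      prob (iidLaw ι (outputLaw p (prodKernel w w')))
        {C | ∏ i, infoRatio (outputLaw p (prodKernel w w')) (C i) ≤ β} := by
  simp only [infoRatio_iid p hw hw']
  rw [funext (outputLaw_prodKernel_iid (ι := ι) p w w')]
  exact prob_comp_equiv (Equiv.arrowProdEquivProdArrow ι (fun _ => V) fun _ => V').symm
    (iidLaw ι (outputLaw p (prodKernel w w')))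
    {C | ∏ i, infoRatio (outputLaw p (prodKernel w w')) (C i) ≤ β}

lemma prob_compProd_prodKernel_iid {ι : Type*} [Fintype ι] [DecidableEq ι] (p : Ω → ℝ)
    (w : Ω → V → ℝ) (w' : Ω → V' → ℝ) (E : Set (ι → Ω × (V × V'))) :
    prob (compProd (iidLaw ι p) (prodKernel (iidKernel ι w) (iidKernel ι w')))
        {x | (fun i => (x.1 i, (x.2.1 i, x.2.2 i))) ∈ E} =
      prob (iidLaw ι (compProd p (prodKernel w w'))) E := by
  set e : ((ι → Ω) × ((ι → V) × (ι → V'))) ≃ (ι → Ω × (V × V')) :=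
    ((Equiv.arrowProdEquivProdArrow ι (fun _ => Ω) fun _ => V × V').trans
      ((Equiv.refl _).prodCongr (Equiv.arrowProdEquivProdArrow ι (fun _ => V) fun _ => V'))).symm
  rw [← prob_comp_equiv e]
  congr 1
  exact funext fun x => by
    simp only [compProd, prodKernel_iid]
    exact prod_mul_distrib.symm

lemma tendsto_coveringError (hp : p ∈ stdSimplex ℝ Ω) (hw : ∀ ω, w ω ∈ stdSimplex ℝ V)
    {r R ρ : ℝ} (hr : mutInf (fun ω v => compProd p w (ω, v)) < r) (hrR : r < R + ρ)
    (hρ : 0 ≤ ρ) :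
    Tendsto (fun n : ℕ => coveringError (Fin ⌈(2 : ℝ) ^ (n * R)⌉₊ × Fin ⌊(2 : ℝ) ^ (n * ρ)⌋₊)
      (iidLaw (Fin n) p) (iidKernel (Fin n) w) (2 ^ (n * r))) atTop (𝓝 0) := by
  simp only [coveringError, prob_compProd_iid_le_density, Fintype.card_prod, Fintype.card_fin,
    Nat.cast_mul]
  have htail := tendsto_prob_iidLaw_two_rpow_le_prod (compProd_mem_stdSimplex hp hw)
    (fun x hx => density_pos hp.1 (fun ω => (hw ω).1) hx) (mutInf_compProd hw ▸ hr)
  have hrate : Tendsto (fun n : ℕ =>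
      (2 : ℝ) ^ (n * r) / (⌈(2 : ℝ) ^ (n * R)⌉₊ * ⌊(2 : ℝ) ^ (n * ρ)⌋₊)) atTop (𝓝 0) := by
    refine squeeze_zero (fun n => by positivity) (fun n => (two_rpow_div_ceil_mul_floor_le _ _
      (mul_nonneg n.cast_nonneg hρ)).trans_eq ?_)
      (mul_zero (2 : ℝ) ▸ (tendsto_two_rpow_nat_mul (sub_neg.2 hrR)).const_mul 2)
    rw [mul_sub, mul_add]
  simpa using hrate.sqrt.add (htail.const_mul 2)

lemma exists_distributedCode_iid_mean_condMean_le {ι I I' L L' : Type*} [Fintype ι] [DecidableEq ι]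
    [Fintype I] [Fintype I'] [Fintype L] [Fintype L'] [Nonempty I] [Nonempty I'] [Nonempty L]
    [Nonempty L'] {k : A → V → ℝ} {k' : A' → V' → ℝ} (hp : p ∈ stdSimplex ℝ Ω)
    (hk : ∀ x, k x ∈ stdSimplex ℝ V) (hk' : ∀ x, k' x ∈ stdSimplex ℝ V')
    (π : Ω → A) (π' : Ω → A') (hw : ∀ ω, w ω = k (π ω)) (hw' : ∀ ω, w' ω = k' (π' ω))
    (B : Set (ι → Ω × (V × V'))) {β γ γ' : ℝ} (hβ : 0 < β) (hγ : 0 ≤ γ)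
    (hγ' : 0 ≤ γ') :
    ∃ c : DistributedCode (ι → A) (ι → A') I I' ((ι → V) × (ι → V')),
      mean (iidLaw ι p) (fun ω => c.condMean (π ∘ ω) (π' ∘ ω) fun v =>
          B.indicator 1 fun i => (ω i, (v.1 i, v.2 i))) ≤
        prob (iidLaw ι (compProd p (prodKernel w w'))) B +
          prob (iidLaw ι (outputLaw p (prodKernel w w')))
            {C | ∏ i, infoRatio (outputLaw p (prodKernel w w')) (C i) ≤ β} +
          (Fintype.card L * Fintype.card L' - 1) / β +
          (coveringError (I × L) (iidLaw ι p) (iidKernel ι w) γ +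
            coveringError (I' × L') (iidLaw ι p) (iidKernel ι w') γ') := by
  rw [← prob_outputLaw_iid_infoRatio_le p (fun ω => hw ω ▸ hk _) fun ω => hw' ω ▸ hk' _,
    ← prob_compProd_prodKernel_iid]
  exact exists_distributedCode_mean_condMean_le (iidLaw_mem_stdSimplex hp)
    (k := iidKernel ι k) (k' := iidKernel ι k')
    (fun x => piLaw_mem_stdSimplex fun i => hk _) (fun x => piLaw_mem_stdSimplex fun i => hk' _)
    (π ∘ ·) (π' ∘ ·) (fun ω => by simp only [iidKernel, hw, Function.comp_apply])
    (fun ω => by simp only [iidKernel, hw', Function.comp_apply])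
    {x | (fun i => (x.1 i, (x.2.1 i, x.2.2 i))) ∈ B} hβ hγ hγ'

lemma exists_tendsto_mean_condMean {k : A → V → ℝ} {k' : A' → V' → ℝ}
    (hp : p ∈ stdSimplex ℝ Ω) (hk : ∀ x, k x ∈ stdSimplex ℝ V) (hk' : ∀ x, k' x ∈ stdSimplex ℝ V')
    (π : Ω → A) (π' : Ω → A') (hw : ∀ ω, w ω = k (π ω)) (hw' : ∀ ω, w' ω = k' (π' ω))
    {R R' ρ ρ' : ℝ} (hρ : 0 ≤ ρ) (hρ' : 0 ≤ ρ')
    (hcover : mutInf (fun ω v => compProd p w (ω, v)) < R + ρ)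
    (hcover' : mutInf (fun ω v => compProd p w' (ω, v)) < R' + ρ')
    (hbin : ρ = 0 ∧ ρ' = 0 ∨ ρ + ρ' < mutInf fun v v' => outputLaw p (prodKernel w w') (v, v'))
    {B : ∀ n, Set (Fin n → Ω × (V × V'))}
    (hB : Tendsto (fun n => prob (iidLaw (Fin n) (compProd p (prodKernel w w'))) (B n))
      atTop (𝓝 0)) :
    ∃ c : ∀ n : ℕ, DistributedCode (Fin n → A) (Fin n → A') (Fin ⌈(2 : ℝ) ^ (n * R)⌉₊)
        (Fin ⌈(2 : ℝ) ^ (n * R')⌉₊) ((Fin n → V) × (Fin n → V')),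
      Tendsto (fun n => mean (iidLaw (Fin n) p) fun ω =>
        (c n).condMean (π ∘ ω) (π' ∘ ω) fun v =>
          (B n).indicator 1 fun i => (ω i, (v.1 i, v.2 i))) atTop (𝓝 0) := by
  have hwmem (ω : Ω) : w ω ∈ stdSimplex ℝ V := hw ω ▸ hk _
  have hwmem' (ω : Ω) : w' ω ∈ stdSimplex ℝ V' := hw' ω ▸ hk' _
  set Q := outputLaw p (prodKernel w w')
  have hQ : Q ∈ stdSimplex ℝ (V × V') :=
    outputLaw_mem_stdSimplex hp (prodKernel_mem_stdSimplex hwmem hwmem')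
  obtain ⟨γ, hγ, hγR⟩ := exists_between hcover
  obtain ⟨γ', hγ', hγR'⟩ := exists_between hcover'
  obtain ⟨β, hβ, hbinβ⟩ : ∃ β < mutInf fun v v' => Q (v, v'), ρ = 0 ∧ ρ' = 0 ∨ ρ + ρ' < β := by
    obtain h | h := hbin
    · exact (exists_lt _).imp fun β hβ => ⟨hβ, .inl h⟩
    · exact (exists_between h).imp fun β hβ => ⟨hβ.2, .inr hβ.1⟩
  have hdecode := tendsto_prob_iidLaw_prod_le_two_rpow hQ (fun v => infoRatio_pos hQ.1)
    (mutInf_eq_mean_logb_infoRatio Q ▸ hβ)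
  have hwrong := tendsto_floor_mul_floor_sub_one_div hρ hρ' hbinβ
  have herror := ((hB.add hdecode).add hwrong).add ((tendsto_coveringError hp hwmem hγ hγR hρ).add
    (tendsto_coveringError hp hwmem' hγ' hγR' hρ'))
  simp only [add_zero] at herror
  have hcode (n : ℕ) := by
    have (x : ℝ) : NeZero ⌈(2 : ℝ) ^ x⌉₊ := ⟨(Nat.ceil_pos.2 (by positivity)).ne'⟩
    have : NeZero ⌊(2 : ℝ) ^ (n * ρ)⌋₊ :=
      ⟨(floor_two_rpow_pos (mul_nonneg n.cast_nonneg hρ)).ne'⟩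
    have : NeZero ⌊(2 : ℝ) ^ (n * ρ')⌋₊ :=
      ⟨(floor_two_rpow_pos (mul_nonneg n.cast_nonneg hρ')).ne'⟩
    exact exists_distributedCode_iid_mean_condMean_le (I := Fin ⌈(2 : ℝ) ^ (n * R)⌉₊)
      (I' := Fin ⌈(2 : ℝ) ^ (n * R')⌉₊) (L := Fin ⌊(2 : ℝ) ^ (n * ρ)⌋₊)
      (L' := Fin ⌊(2 : ℝ) ^ (n * ρ')⌋₊) hp hk hk' π π' hw hw' (B n) (β := 2 ^ (n * β))
      (γ := 2 ^ (n * γ)) (γ' := 2 ^ (n * γ')) (by positivity) (by positivity) (by positivity)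
  choose c hc using hcode
  simp only [Fintype.card_fin] at hc
  exact ⟨c, squeeze_zero (fun n => mean_nonneg (iidLaw_mem_stdSimplex hp).1 fun ω =>
    mean_nonneg ((c n).enc_mem _).1 fun m => mean_nonneg ((c n).enc'_mem _).1 fun m' =>
    indicator_one_nonneg _ _) hc herror⟩

end Asymptotics

section Distortion

variable {Ω A A' V V' : Type*} [Fintype Ω] {p : Ω → ℝ} {w : Ω → V → ℝ} {w' : Ω → V' → ℝ}

lemma exists_tendsto_zero_natCast_mul_sq_tendsto_atTop :
    ∃ δ : ℕ → ℝ, (∀ n, 0 ≤ δ n) ∧ (∀ᶠ n in atTop, 0 < δ n) ∧ Tendsto δ atTop (𝓝 0) ∧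
      Tendsto (fun n => n * δ n ^ 2) atTop atTop := by
  refine ⟨fun n => (n : ℝ) ^ (-(1 / 4) : ℝ), fun n => by positivity, ?_, ?_, ?_⟩
  · filter_upwards [eventually_gt_atTop 0] with n hn
    exact Real.rpow_pos_of_pos (mod_cast hn) _
  · exact (tendsto_rpow_neg_atTop (by norm_num)).comp tendsto_natCast_atTop_atTop
  · refine ((tendsto_rpow_atTop (y := 1 / 2) (by norm_num)).comp
      tendsto_natCast_atTop_atTop).congr' ?_
    filter_upwards [eventually_gt_atTop 0] with n hn
    have hn' : (0 : ℝ) < n := mod_cast hn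
    rw [Function.comp_apply, ← Real.rpow_mul_natCast hn'.le, ← Real.rpow_one_add' hn'.le] <;>
      norm_num

lemma expect_le_add_mul_indicator {ι E : Type*} [Fintype ι] {d : E → ℝ} {K : ℝ}
    (hK : 0 ≤ K) (hd : ∀ x, d x ≤ K) {c : ℝ} (hc : 0 ≤ c) {B : Set (ι → E)} {C : ι → E}
    (hB : c ≤ 𝔼 t, d (C t) → C ∈ B) :
    𝔼 t, d (C t) ≤ c + K * B.indicator 1 C := by
  by_cases hC : C ∈ B
  · rw [Set.indicator_of_mem hC, Pi.one_apply, mul_one]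
    refine le_add_of_nonneg_of_le hc ?_
    cases isEmpty_or_nonempty ι
    · simpa only [univ_eq_empty, expect_empty] using hK
    · exact expect_le univ_nonempty fun t _ => hd _
  · rw [Set.indicator_of_notMem hC, mul_zero, add_zero]
    exact le_of_not_ge fun h => hC (hB h)

/-- Outside a bad event of vanishing probability the empirical distortion is at most `D + δ n`, and
on that event it is bounded. -/
lemma limsup_mean_condMean_expect_le (hp : p ∈ stdSimplex ℝ Ω) {M M' : ℕ → Type*}
    [∀ n, Fintype (M n)] [∀ n, Fintype (M' n)] {π : Ω → A} {π' : Ω → A'}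
    (c : ∀ n, DistributedCode (Fin n → A) (Fin n → A') (M n) (M' n) ((Fin n → V) × (Fin n → V')))
    {d : Ω × (V × V') → ℝ} (hd : ∀ x, 0 ≤ d x) (hd' : BddAbove (Set.range d)) {D : ℝ} (hD : 0 ≤ D)
    {δ : ℕ → ℝ}
    (hδ : ∀ n, 0 ≤ δ n) (hδ₀ : Tendsto δ atTop (𝓝 0)) {B : ∀ n, Set (Fin n → Ω × (V × V'))}
    (hB : ∀ n C, D + δ n ≤ 𝔼 t, d (C t) → C ∈ B n)
    (hc : Tendsto (fun n => mean (iidLaw (Fin n) p) fun ω =>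
      (c n).condMean (π ∘ ω) (π' ∘ ω) fun v => (B n).indicator 1 fun t => (ω t, (v.1 t, v.2 t)))
      atTop (𝓝 0)) :
    atTop.limsup (fun n => mean (iidLaw (Fin n) p) fun ω =>
      (c n).condMean (π ∘ ω) (π' ∘ ω) fun v => 𝔼 t, d (ω t, (v.1 t, v.2 t))) ≤ D := by
  obtain ⟨K, hK⟩ := hd'
  have hdK (x) : d x ≤ max K 0 := le_max_of_le_left (hK (Set.mem_range_self x))
  have hpn (n : ℕ) := iidLaw_mem_stdSimplex (ι := Fin n) hp
  have hbound (n : ℕ) : (mean (iidLaw (Fin n) p) fun ω =>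
        (c n).condMean (π ∘ ω) (π' ∘ ω) fun v => 𝔼 t, d (ω t, (v.1 t, v.2 t))) ≤
      D + δ n + max K 0 * mean (iidLaw (Fin n) p) fun ω => (c n).condMean (π ∘ ω) (π' ∘ ω) fun v =>
        (B n).indicator 1 fun t => (ω t, (v.1 t, v.2 t)) := by
    refine (mean_le_mean (hpn n).1 fun ω => mean_le_mean ((c n).enc_mem _).1 fun m =>
      mean_le_mean ((c n).enc'_mem _).1 fun m' => expect_le_add_mul_indicator
        (le_max_right _ _) hdK (add_nonneg hD (hδ n)) (hB n _)).trans_eq ?_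
    simp only [mean_add, mean_const_mul, mean_const ((c n).enc'_mem _).2,
      mean_const ((c n).enc_mem _).2, mean_const (hpn n).2, DistributedCode.condMean]
  have hlim := (hδ₀.const_add D).add (hc.const_mul (max K 0))
  rw [add_zero, mul_zero, add_zero] at hlim
  refine (limsup_le_limsup (.of_forall hbound) ?_ hlim.isBoundedUnder_le).trans_eq hlim.limsup_eq
  exact isCoboundedUnder_le_of_le atTop (x := 0) fun n => mean_nonneg (hpn n).1 fun ω =>
    mean_nonneg ((c n).enc_mem _).1 fun m => mean_nonneg ((c n).enc'_mem _).1 fun m' =>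
      expect_nonneg fun t _ => hd _

variable [Fintype V] [Fintype V']

lemma exists_limsup_mean_condMean_expect_le {k : A → V → ℝ} {k' : A' → V' → ℝ}
    (hp : p ∈ stdSimplex ℝ Ω) (hk : ∀ x, k x ∈ stdSimplex ℝ V) (hk' : ∀ x, k' x ∈ stdSimplex ℝ V')
    (π : Ω → A) (π' : Ω → A') (hw : ∀ ω, w ω = k (π ω)) (hw' : ∀ ω, w' ω = k' (π' ω))
    {d d' : Ω × (V × V') → ℝ} (hd : ∀ x, 0 ≤ d x) (hd' : ∀ x, 0 ≤ d' x) {D D' : ℝ}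
    (hD : mean (compProd p (prodKernel w w')) d ≤ D)
    (hD' : mean (compProd p (prodKernel w w')) d' ≤ D') {R R' : ℝ}
    (hR : mutInf (fun ω v => compProd p w (ω, v)) -
      mutInf (fun v v' => outputLaw p (prodKernel w w') (v, v')) < R)
    (hR' : mutInf (fun ω v => compProd p w' (ω, v)) -
      mutInf (fun v v' => outputLaw p (prodKernel w w') (v, v')) < R')
    (hRR' : mutInf (fun ω v => compProd p (prodKernel w w') (ω, v)) < R + R') :
    ∃ c : ∀ n : ℕ, DistributedCode (Fin n → A) (Fin n → A') (Fin ⌈(2 : ℝ) ^ (n * R)⌉₊)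
        (Fin ⌈(2 : ℝ) ^ (n * R')⌉₊) ((Fin n → V) × (Fin n → V')),
      atTop.limsup (fun n => mean (iidLaw (Fin n) p) fun ω =>
        (c n).condMean (π ∘ ω) (π' ∘ ω) fun v => 𝔼 t, d (ω t, (v.1 t, v.2 t))) ≤ D ∧
      atTop.limsup (fun n => mean (iidLaw (Fin n) p) fun ω =>
        (c n).condMean (π ∘ ω) (π' ∘ ω) fun v => 𝔼 t, d' (ω t, (v.1 t, v.2 t))) ≤ D' := by
  have hwmem (ω : Ω) : w ω ∈ stdSimplex ℝ V := hw ω ▸ hk _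
  have hwmem' (ω : Ω) : w' ω ∈ stdSimplex ℝ V' := hw' ω ▸ hk' _
  have hP := compProd_mem_stdSimplex hp (prodKernel_mem_stdSimplex hwmem hwmem')
  rw [mutInf_compProd_prodKernel hp.1 hwmem hwmem'] at hRR'
  obtain ⟨ρ, ρ', hρ, hρ', hcover, hcover', hbin⟩ := exists_bin_rates hR hR' hRR'
  obtain ⟨δ, hδ, hδpos, hδ₀, hδn⟩ := exists_tendsto_zero_natCast_mul_sq_tendsto_atTop
  have hbad := tendsto_prob_iidLaw_expect_ge hP hD hδpos hδn
  have hbad' := tendsto_prob_iidLaw_expect_ge hP hD' hδpos hδn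
  set B := fun n => {C : Fin n → Ω × (V × V') | D + δ n ≤ 𝔼 t, d (C t)} ∪
    {C | D' + δ n ≤ 𝔼 t, d' (C t)}
  have hB : Tendsto (fun n => prob (iidLaw (Fin n) (compProd p (prodKernel w w'))) (B n))
      atTop (𝓝 0) :=
    squeeze_zero (fun n => prob_nonneg (iidLaw_mem_stdSimplex hP).1 _)
      (fun n => prob_le_add_of_subset_union (iidLaw_mem_stdSimplex hP).1 subset_rfl)
      (add_zero (0 : ℝ) ▸ hbad.add hbad')
  obtain ⟨c, hc⟩ := exists_tendsto_mean_condMean hp hk hk' π π' hw hw' hρ hρ' hcover hcover' hbin hB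
  exact ⟨c, limsup_mean_condMean_expect_le hp c hd (Set.finite_range d).bddAbove
      ((mean_nonneg hP.1 hd).trans hD) hδ hδ₀ (fun n C hC => .inl hC) hc,
    limsup_mean_condMean_expect_le hp c hd' (Set.finite_range d').bddAbove
      ((mean_nonneg hP.1 hd').trans hD') hδ hδ₀ (fun n C hC => .inr hC) hc⟩

end Distortion

section Reduction

lemma sum_sum_prod_mul_eq_mean_iidLaw {ι A A' : Type*} [Fintype ι] [DecidableEq ι] [Fintype A]
    [Fintype A'] (P : A × A' → ℝ) (F : (ι → A) → (ι → A') → ℝ) :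
    ∑ x, ∑ x', (∏ t, P (x t, x' t)) * F x x' =
      mean (iidLaw ι P) fun ω => F (Prod.fst ∘ ω) (Prod.snd ∘ ω) := by
  rw [← mean_comp_equiv (Equiv.arrowProdEquivProdArrow ι (fun _ => A) fun _ => A').symm, mean,
    Fintype.sum_prod_type]
  rfl

lemma DistributedCode.sum_sum_enc_mul_single {A A' M M' B : Type*} [Fintype M] [Fintype M']
    [Fintype B] [DecidableEq B] (c : DistributedCode A A' M M' B) (x : A) (x' : A') (f : B → ℝ) :
    ∑ m, ∑ m', c.enc x m * c.enc' x' m' * ∑ y, (Pi.single (c.dec m m') 1 : B → ℝ) y * f y =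
      c.condMean x x' f := by
  simp only [condMean, mean, mul_sum, mul_assoc, Pi.single_apply, ite_mul, one_mul, zero_mul,
    sum_ite_eq', mem_univ, if_true]

variable {X1 X2 U1 U2 : Type*} [Fintype X1] [Fintype X2] [Fintype U1] [Fintype U2]
  (Px : X1 × X2 → ℝ) (W1 : U1 → X1 → ℝ) (W2 : U2 → X2 → ℝ)

lemma mean_compProd_prodKernel_eq_sum (f : (X1 × X2) × (U1 × U2) → ℝ) :
    mean (compProd Px (prodKernel (fun ω u => W1 u ω.1) fun ω u => W2 u ω.2)) f =
      ∑ u1, ∑ x1, ∑ x2, ∑ u2, Px (x1, x2) * W1 u1 x1 * W2 u2 x2 * f ((x1, x2), (u1, u2)) := by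
  simp only [mean, compProd, prodKernel, prodLaw, Fintype.sum_prod_type, mul_assoc]
  exact (sum_congr rfl fun x1 _ => sum_comm).trans sum_comm

variable {Px W1 W2}

lemma condMutInf_left_eq_sub (hPx : ∀ p, 0 ≤ Px p)
    (hW1 : ∀ x, (W1 · x) ∈ stdSimplex ℝ U1) (hW2 : ∀ x, (W2 · x) ∈ stdSimplex ℝ U2) :
    condMutInf (fun x1 u1 u2 => ∑ x2, Px (x1, x2) * W1 u1 x1 * W2 u2 x2) =
      mutInf (fun ω u => compProd Px (fun ω u => W1 u ω.1) (ω, u)) - mutInf fun u1 u2 =>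
        outputLaw Px (prodKernel (fun ω u => W1 u ω.1) fun ω u => W2 u ω.2) (u1, u2) := by
  rw [← condMutInf_eq_mutInf_sub_mutInf hPx (Equiv.refl _) (w := fun ω u => W1 u ω.1)
    (k := fun x u => W1 u x) hW1 (fun _ => rfl) fun ω => hW2 ω.2]
  simp only [compProd, prodKernel, prodLaw, mul_assoc, Equiv.refl_apply]

lemma condMutInf_right_eq_sub (hPx : ∀ p, 0 ≤ Px p)
    (hW1 : ∀ x, (W1 · x) ∈ stdSimplex ℝ U1) (hW2 : ∀ x, (W2 · x) ∈ stdSimplex ℝ U2) :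
    condMutInf (fun x2 u2 u1 => ∑ x1, Px (x1, x2) * W1 u1 x1 * W2 u2 x2) =
      mutInf (fun ω u => compProd Px (fun ω u => W2 u ω.2) (ω, u)) - mutInf fun u1 u2 =>
        outputLaw Px (prodKernel (fun ω u => W1 u ω.1) fun ω u => W2 u ω.2) (u1, u2) := by
  rw [← mutInf_comm fun u1 u2 => outputLaw Px _ (u1, u2)]
  simp only [← outputLaw_prodKernel_swap Px (fun ω u => W1 u ω.1)]
  rw [← condMutInf_eq_mutInf_sub_mutInf hPx (Equiv.prodComm X2 X1) (w := fun ω u => W2 u ω.2)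
    (k := fun x u => W2 u x) hW2 (fun _ => rfl) fun ω => hW1 ω.1]
  simp only [compProd, prodKernel, prodLaw, mul_assoc, mul_comm (W2 _ _), Equiv.prodComm_apply,
    Prod.swap_prod_mk]

end Reduction

/-- Berger–Tung inner bound: Let `P̄_{X₁X₂}` be a joint source
pmf on the finite set `X₁ × X₂`, `P̄_{U₁|X₁}`, `P̄_{U₂|X₂}` conditional pmfs, so
that `P̄(u₁,x₁,x₂,u₂) = P̄_{X₁X₂}(x₁,x₂) P̄_{U₁|X₁}(u₁|x₁) P̄_{U₂|X₂}(u₂|x₂)`,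
and `φ_k : U₁ × U₂ → Y_k` reconstruction functions with
`E_{P̄}[d_k(X_k, φ_k(U₁,U₂))] ≤ D_k` for `k = 1,2`.  Then any rate pair with
`R₁ > I(X₁;U₁|U₂)`, `R₂ > I(X₂;U₂|U₁)` and `R₁ + R₂ > I(X₁,X₂;U₁,U₂)` is
achievable under distortions `(D₁,D₂)`: there are message sets of sizes
`≤ ⌈2^{nR₁}⌉` and `≤ ⌈2^{nR₂}⌉`, separate stochastic encoders and a joint
stochastic decoder (Markov kernels) with
`limsup_n E[(1/n) ∑ₜ d_k(X_{k,t}, Y_{k,t})] ≤ D_k`, `k = 1,2`, for the i.i.d.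
sources `(X₁ₜ, X₂ₜ) ∼ P̄_{X₁X₂}`. -/
theorem berger_tung_inner_bound
    {X1 X2 U1 U2 Y1 Y2 : Type*}
    [Fintype X1] [Fintype X2] [Fintype U1] [Fintype U2] [Fintype Y1] [Fintype Y2]
    (Px : X1 × X2 → ℝ)
    (hPx0 : ∀ p, 0 ≤ Px p) (hPx1 : ∑ p, Px p = 1)
    (W1 : U1 → X1 → ℝ) (hW10 : ∀ u x, 0 ≤ W1 u x) (hW11 : ∀ x, ∑ u, W1 u x = 1)
    (W2 : U2 → X2 → ℝ) (hW20 : ∀ u x, 0 ≤ W2 u x) (hW21 : ∀ x, ∑ u, W2 u x = 1)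
    (d1 : X1 → Y1 → ℝ) (hd1 : ∀ x y, 0 ≤ d1 x y)
    (d2 : X2 → Y2 → ℝ) (hd2 : ∀ x y, 0 ≤ d2 x y)
    (φ1 : U1 → U2 → Y1) (φ2 : U1 → U2 → Y2)
    (D1 D2 : ℝ)
    (hD1 : ∑ u1, ∑ x1, ∑ x2, ∑ u2,
        Px (x1, x2) * W1 u1 x1 * W2 u2 x2 * d1 x1 (φ1 u1 u2) ≤ D1)
    (hD2 : ∑ u1, ∑ x1, ∑ x2, ∑ u2,
        Px (x1, x2) * W1 u1 x1 * W2 u2 x2 * d2 x2 (φ2 u1 u2) ≤ D2)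
    (R1 R2 : ℝ)
    (hR1 : R1 > condMutInf (fun x1 u1 u2 =>
        ∑ x2, Px (x1, x2) * W1 u1 x1 * W2 u2 x2))
    (hR2 : R2 > condMutInf (fun x2 u2 u1 =>
        ∑ x1, Px (x1, x2) * W1 u1 x1 * W2 u2 x2))
    (hR12 : R1 + R2 > mutInf (fun (p : X1 × X2) (q : U1 × U2) =>
        Px p * W1 q.1 p.1 * W2 q.2 p.2)) :
    ∃ M1 M2 : ℕ → ℕ,
      (∀ n, M1 n ≤ Nat.ceil ((2 : ℝ) ^ ((n : ℝ) * R1))) ∧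
      (∀ n, M2 n ≤ Nat.ceil ((2 : ℝ) ^ ((n : ℝ) * R2))) ∧
      ∃ (enc1 : ∀ n : ℕ, (Fin n → X1) → Fin (M1 n) → ℝ)
        (enc2 : ∀ n : ℕ, (Fin n → X2) → Fin (M2 n) → ℝ)
        (dec : ∀ n : ℕ, Fin (M1 n) → Fin (M2 n) →
          ((Fin n → Y1) × (Fin n → Y2)) → ℝ),
        (∀ n x1n, (∀ m1, 0 ≤ enc1 n x1n m1) ∧ ∑ m1, enc1 n x1n m1 = 1) ∧
        (∀ n x2n, (∀ m2, 0 ≤ enc2 n x2n m2) ∧ ∑ m2, enc2 n x2n m2 = 1) ∧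
        (∀ n m1 m2, (∀ y, 0 ≤ dec n m1 m2 y) ∧ ∑ y, dec n m1 m2 y = 1) ∧
        Filter.atTop.limsup
          (fun n : ℕ =>
            ∑ x1n : Fin n → X1, ∑ x2n : Fin n → X2,
              (∏ t, Px (x1n t, x2n t)) *
                ∑ m1, ∑ m2, enc1 n x1n m1 * enc2 n x2n m2 *
                  ∑ y : (Fin n → Y1) × (Fin n → Y2), dec n m1 m2 y *
                    ((n : ℝ)⁻¹ * ∑ t, d1 (x1n t) (y.1 t)))
          ≤ D1 ∧
        Filter.atTop.limsup
          (fun n : ℕ =>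
            ∑ x1n : Fin n → X1, ∑ x2n : Fin n → X2,
              (∏ t, Px (x1n t, x2n t)) *
                ∑ m1, ∑ m2, enc1 n x1n m1 * enc2 n x2n m2 *
                  ∑ y : (Fin n → Y1) × (Fin n → Y2), dec n m1 m2 y *
                    ((n : ℝ)⁻¹ * ∑ t, d2 (x2n t) (y.2 t)))
          ≤ D2 := by
  classical
  have hW1 (x) : (W1 · x) ∈ stdSimplex ℝ U1 := ⟨fun u => hW10 u x, hW11 x⟩
  have hW2 (x) : (W2 · x) ∈ stdSimplex ℝ U2 := ⟨fun u => hW20 u x, hW21 x⟩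
  rw [gt_iff_lt, condMutInf_left_eq_sub hPx0 hW1 hW2] at hR1
  rw [gt_iff_lt, condMutInf_right_eq_sub hPx0 hW1 hW2] at hR2
  simp only [gt_iff_lt, mul_assoc] at hR12
  obtain ⟨c, hc1, hc2⟩ := exists_limsup_mean_condMean_expect_le ⟨hPx0, hPx1⟩ hW1 hW2 Prod.fst
    Prod.snd (fun _ => rfl) (fun _ => rfl)
    (d := fun x => d1 x.1.1 (φ1 x.2.1 x.2.2)) (d' := fun x => d2 x.1.2 (φ2 x.2.1 x.2.2))
    (fun _ => hd1 _ _) (fun _ => hd2 _ _)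
    ((mean_compProd_prodKernel_eq_sum Px W1 W2 _).trans_le hD1)
    ((mean_compProd_prodKernel_eq_sum Px W1 W2 _).trans_le hD2) hR1 hR2 hR12
  simp only [Fintype.expect_eq_sum_div_card, Fintype.card_fin, div_eq_inv_mul] at hc1 hc2
  let b n := (c n).map fun u =>
    ((fun t => φ1 (u.1 t) (u.2 t) : Fin n → Y1), (fun t => φ2 (u.1 t) (u.2 t) : Fin n → Y2))
  refine ⟨_, _, fun n => le_rfl, fun n => le_rfl, fun n => (b n).enc, fun n => (b n).enc',
    fun n m m' => Pi.single ((b n).dec m m') 1, fun n => (b n).enc_mem, fun n => (b n).enc'_mem,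
    fun n m m' => single_mem_stdSimplex ℝ _, ?_⟩
  simp only [DistributedCode.sum_sum_enc_mul_single, sum_sum_prod_mul_eq_mean_iidLaw]
  exact ⟨hc1, hc2⟩
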